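/- arXiv:1703.02848 — 2 statements merged into one kernel-verified Lean document; each statement's English description precedes it below -/
import Mathlib

section
/- Let n = 55 and let x, y ∈ S_55 be the permutations given in the context, with z = (x·y)⁻¹. Then (x, y, z) is a nice triple; the cycle types of x, y, z are 6^8·3^2, 2^25 and 4^12·2^3 respectively; and the subgroup ⟨x, y⟩ of S_55 has cardinality 1320 (the order of PGL(2,11)). -/
/-- `permInd s` = (sum of the cycle type of `s`) − (number of entries of the cycle type of `s`),
i.e. `n` minus the number of cycles of `s` when fixed points are counted as cycles. -/
def permInd {n : ℕ} (s : Equiv.Perm (Fin n)) : ℕ :=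
  s.cycleType.sum - Multiset.card s.cycleType

/-- A `MulAction` is preprimitive if it is pretransitive and every block is trivial. -/
def IsPreprimitive (G : Type*) (X : Type*) [Group G] [MulAction G X] : Prop :=
  MulAction.IsPretransitive G X ∧
    ∀ B : Set X, MulAction.IsBlock G B → MulAction.IsTrivialBlock B

/-- A triple `(x, y, z)` of permutations in `S_n` is *nice*:
(i) `x * y * z = 1`; (ii) `G = ⟨x, y⟩` is neither the alternating nor the symmetric group;
(iii) `G` acts primitively on `Fin n` and is almost simple; (iv) the triple has genus 0;
(v) the triple is rigid in `G`; (vi) `x`, `y`, `z` lie in rational conjugacy classes of `G`. -/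
def IsNice {n : ℕ} (x y z : Equiv.Perm (Fin n)) : Prop :=
  x * y * z = 1 ∧
  (Subgroup.closure {x, y} ≠ alternatingGroup (Fin n) ∧
    Subgroup.closure {x, y} ≠ ⊤) ∧
  IsPreprimitive (Subgroup.closure {x, y}) (Fin n) ∧
  (∃ S : Subgroup (Subgroup.closure {x, y}), S.Normal ∧ IsSimpleGroup S ∧
    (∃ a b : S, a * b ≠ b * a) ∧
    Subgroup.centralizer (S : Set (Subgroup.closure {x, y})) = ⊥) ∧
  permInd x + permInd y + permInd z = 2 * (n - 1) ∧
  (∀ x' y' z' : Equiv.Perm (Fin n),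
    x' * y' * z' = 1 →
    Subgroup.closure {x', y'} = Subgroup.closure {x, y} →
    (∃ g ∈ Subgroup.closure {x, y}, g * x * g⁻¹ = x') →
    (∃ g ∈ Subgroup.closure {x, y}, g * y * g⁻¹ = y') →
    (∃ g ∈ Subgroup.closure {x, y}, g * z * g⁻¹ = z') →
    ∃ g ∈ Subgroup.closure {x, y},
      g * x * g⁻¹ = x' ∧ g * y * g⁻¹ = y' ∧ g * z * g⁻¹ = z') ∧
  ∀ g ∈ ({x, y, z} : Set (Equiv.Perm (Fin n))), ∀ k : ℤ,
    Int.gcd k (orderOf g) = 1 →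
    ∃ h ∈ Subgroup.closure {x, y}, h * g * h⁻¹ = g ^ k

/-- The permutation given by a list of (disjoint) cycles, each written as a list of points. -/
def permOfCycles {n : ℕ} (cs : List (List (Fin n))) : Equiv.Perm (Fin n) :=
  (cs.map List.formPerm).prod

def x : Equiv.Perm (Fin 55) := permOfCycles [
  [1, 33, 17, 8, 41, 32],
  [2, 51, 45, 36, 55, 50],
  [3, 43, 47, 24, 44, 25],
  [4, 40, 49, 52, 18, 6],
  [5, 7, 26, 16, 37, 23],
  [9, 21, 22, 38, 31, 20],
  [10, 48, 29, 30, 35, 19],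
  [11, 28, 54],
  [12, 15, 13, 34, 42, 27],
  [39, 46, 53]]

def y : Equiv.Perm (Fin 55) := permOfCycles [
  [1, 26],
  [2, 41],
  [3, 51],
  [4, 32],
  [5, 29],
  [6, 37],
  [7, 20],
  [8, 47],
  [10, 44],
  [11, 50],
  [12, 52],
  [13, 15],
  [14, 35],
  [17, 46],
  [18, 23],
  [19, 42],
  [21, 48],
  [24, 38],
  [25, 45],
  [27, 30],
  [31, 39],
  [33, 53],
  [34, 36],
  [40, 54],
  [49, 55]]

/-!
The group `G = ⟨x, y⟩` is `PGL(2, 11)` acting on the `55` pairs of conjugate points of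
`P¹(𝔽₁₂₁) ∖ P¹(𝔽₁₁)`. Every element of `G` is the product of an element of a Borel subgroup of
order `110` and an element of a nonsplit torus of order `12`, so `|G| ≤ 1320`; the stabilizer of a
point contains the noncommutative normalizer of the torus, so `|G| ≥ 55 · 24 = 1320`.

The element `x ^ 2` has order `3` and a single fixed point, so a block through this point has size
congruent to `1` modulo `3` and dividing `55`: the action is primitive. The same applies to the
subgroup `S` of even permutations in `G`, of order `660`. A nontrivial normal subgroup `N` of `S` is
transitive, so `55 ∣ |N|`; its Sylow `11`-subgroup cannot be normal in `S`, since it would be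
transitive too, so it has `12` conjugates and `660 = lcm(55, 12)` divides `|N|`: thus `S` is simple.

An involution of `G` inverts both `x` and `y`, which gives rationality because `6`, `2` and `4` have
only `±1` as units. For rigidity one conjugates to `x' = x`; then `y'` ranges over the conjugates
of `y` modulo the torus, which centralizes `x`, and only those in the torus orbit of `y` make `x y'`
an element of order `4`.
-/

theorem cycleType_permOfCycles {n : ℕ} {cs : List (List (Fin n))} (hcs : cs.flatten.Nodup)
    (hlen : ∀ l ∈ cs, 2 ≤ l.length) :
    (permOfCycles cs).cycleType = (cs.map List.length : List ℕ) := by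
  obtain ⟨hnodup, hdisj⟩ := List.nodup_flatten.1 hcs
  rw [permOfCycles, Equiv.Perm.cycleType_eq (cs.map List.formPerm) rfl, List.map_map]
  · refine congrArg _ (List.map_congr_left fun l hl => ?_)
    have hne : ∀ a, l ≠ [a] := by
      rintro a rfl
      simpa using hlen _ hl
    rw [Function.comp_apply, Function.comp_apply,
      List.support_formPerm_of_nodup l (hnodup l hl) hne,
      List.toFinset_card_of_nodup (hnodup l hl)]
  · exact List.forall_mem_map.2 fun l hl => List.isCycle_formPerm (hnodup l hl) (hlen l hl)
  · refine List.pairwise_map.2 (hdisj.imp_of_mem fun {l m} hl hm hlm => ?_)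
    exact (List.formPerm_disjoint_iff (hnodup l hl) (hnodup m hm) (hlen l hl) (hlen m hm)).2 hlm

section PrimitiveGroups

variable {G X : Type*} [Group G] [MulAction G X]

open MulAction

open scoped Pointwise

theorem ncard_modEq_one_of_fixedBy_eq_singleton [Finite X] {p k : ℕ} [Fact p.Prime] {g : G}
    (hg : g ^ p ^ k = 1) {a : X} (hfix : fixedBy X g = {a}) {B : Set X} (ha : a ∈ B)
    (hB : g • B = B) : B.ncard ≡ 1 [MOD p] := by
  classical
  have := Fintype.ofFinite B
  let f : Function.End B := fun b => ⟨g • (b : X), hB.subset (Set.smul_mem_smul_set b.2)⟩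
  have hpow (m : ℕ) (b : B) : ((f ^ m) b : X) = g ^ m • (b : X) := by
    induction m generalizing b with
    | zero => exact ((congrArg (· • (b : X)) (pow_zero g)).trans (one_smul G _)).symm
    | succ m ih => exact (ih (f b)).trans (by rw [pow_succ, mul_smul])
  have hf : f ^ p ^ k = 1 := funext fun b => Subtype.ext (by rw [hpow, hg, one_smul]; rfl)
  have hfixed : Function.fixedPoints f = {⟨a, ha⟩} := by
    ext b
    rw [Function.mem_fixedPoints, Function.IsFixedPt, Set.mem_singleton_iff, Subtype.ext_iff,
      Subtype.ext_iff]
    exact Set.ext_iff.1 hfix b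
  have hcard := Equiv.Perm.card_fixedPoints_modEq hf
  rw [← Nat.card_eq_fintype_card, Nat.card_coe_set_eq] at hcard
  exact hcard.trans (by rw [Fintype.card_congr (Equiv.setCongr hfixed), Fintype.card_unique])

theorem isPreprimitive_of_fixedBy_eq_singleton [Finite X] [IsPretransitive G X] {p k : ℕ}
    [Fact p.Prime] {g : G} (hg : g ^ p ^ k = 1) {a : X} (hfix : fixedBy X g = {a})
    (hdvd : ∀ d, d ∣ Nat.card X → d ≡ 1 [MOD p] → d = 1 ∨ d = Nat.card X) :
    MulAction.IsPreprimitive G X := by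
  refine .of_isTrivialBlock_base a fun {B} ha hB => ?_
  have hga : g • a = a := hfix.ge rfl
  have hgB : g • B = B := hB.smul_eq_of_mem ha (by rwa [hga])
  obtain hone | hall :=
    hdvd _ (hB.ncard_dvd_card ⟨a, ha⟩) (ncard_modEq_one_of_fixedBy_eq_singleton hg hfix ha hgB)
  · exact .inl (Set.ncard_le_one_iff_subsingleton.1 hone.le)
  · refine .inr (Set.eq_of_subset_of_ncard_le (Set.subset_univ B) ?_)
    rw [hall, Set.ncard_univ]

theorem isPretransitive_of_normal_of_ne_bot [IsQuasiPreprimitive G X] [FaithfulSMul G X]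
    {N : Subgroup G} [N.Normal] (hN : N ≠ ⊥) : IsPretransitive N X := by
  refine IsQuasiPreprimitive.isPretransitive_of_normal fun hfixed => hN ?_
  refine (Subgroup.eq_bot_iff_forall _).2 fun g hg => eq_of_smul_eq_smul fun a : X => ?_
  have ha : a ∈ fixedPoints N X := hfixed ▸ Set.mem_univ a
  simpa using ha ⟨g, hg⟩

theorem card_dvd_card_of_isPretransitive [IsPretransitive G X] [Nonempty X] :
    Nat.card X ∣ Nat.card G :=
  index_stabilizer_of_transitive G (Classical.arbitrary X) ▸ Subgroup.index_dvd_card _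

theorem card_sylow_ne_one_of_normal [Finite G] [IsQuasiPreprimitive G X] [FaithfulSMul G X]
    [Nonempty X] {p : ℕ} [Fact p.Prime] (hp : p ∣ Nat.card X) (hX : ¬ IsPrimePow (Nat.card X))
    {N : Subgroup G} [N.Normal] (hN : N ≠ ⊥) : Nat.card (Sylow p N) ≠ 1 := by
  intro hone
  have := (Nat.card_eq_one_iff_unique.1 hone).1
  have := isPretransitive_of_normal_of_ne_bot (X := X) hN
  let P : Sylow p N := default
  -- The Sylow subgroup is characteristic in `N`, hence a normal, transitive subgroup of `G`.
  let Q : Subgroup G := (P : Subgroup N).map N.subtype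
  have hQ : Q ≠ ⊥ := by
    rw [Ne, Subgroup.map_eq_bot_iff_of_injective _ N.subtype_injective]
    exact P.ne_bot_of_dvd_card (hp.trans (card_dvd_card_of_isPretransitive (X := X)))
  have := isPretransitive_of_normal_of_ne_bot (X := X) hQ
  have hdvd : Nat.card X ∣ Nat.card Q := card_dvd_card_of_isPretransitive
  obtain ⟨k, hk⟩ := IsPGroup.iff_card.1 (P.isPGroup'.map N.subtype)
  obtain ⟨m, -, hm⟩ := (Nat.dvd_prime_pow Fact.out).1 (hk ▸ hdvd)
  have hm0 : m ≠ 0 := by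
    rintro rfl
    rw [hm, pow_zero] at hp
    exact (Fact.out : p.Prime).one_lt.ne' (Nat.dvd_one.1 hp)
  exact hX (hm ▸ (Fact.out : p.Prime).isPrimePow.pow hm0)

theorem isSimpleGroup_of_isQuasiPreprimitive [Finite G] [IsQuasiPreprimitive G X]
    [FaithfulSMul G X] [Nonempty X] {p : ℕ} [Fact p.Prime] (hp : p ∣ Nat.card X)
    (hX : ¬ IsPrimePow (Nat.card X))
    (hsylow : ∀ d, d ∣ Nat.card G → d ≡ 1 [MOD p] → d ≠ 1 → Nat.card G ∣ (Nat.card X).lcm d) :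
    IsSimpleGroup G where
  exists_pair_ne := by
    have hpG := hp.trans (card_dvd_card_of_isPretransitive (G := G) (X := X))
    have := Nat.le_of_dvd Nat.card_pos hpG
    have := Finite.one_lt_card_iff_nontrivial.1 ((Fact.out : p.Prime).one_lt.trans_le this)
    exact exists_pair_ne G
  eq_bot_or_eq_top_of_normal N _ := by
    refine or_iff_not_imp_left.2 fun hN => Subgroup.eq_top_of_le_card N ?_
    have := isPretransitive_of_normal_of_ne_bot (X := X) hN
    have hdvd : Nat.card (Sylow p N) ∣ Nat.card N :=
      (default : Sylow p N).card_dvd_index.trans (Subgroup.index_dvd_card _)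
    refine Nat.le_of_dvd Nat.card_pos ((hsylow _ (hdvd.trans N.card_subgroup_dvd_card)
      (card_sylow_modEq_one p N) (card_sylow_ne_one_of_normal hp hX hN)).trans ?_)
    exact Nat.lcm_dvd card_dvd_card_of_isPretransitive hdvd

theorem centralizer_eq_bot_of_fixedBy_eq_singleton [FaithfulSMul G X] {S : Subgroup G}
    [IsPretransitive S X] {g : G} (hg : g ∈ S) {a : X} (hfix : fixedBy X g = {a}) :
    Subgroup.centralizer (S : Set G) = ⊥ := by
  refine (Subgroup.eq_bot_iff_forall _).2 fun h hh => eq_of_smul_eq_smul fun b : X => ?_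
  have hga : g • a = a := hfix.ge rfl
  have ha : h • a = a := by
    refine hfix.le (?_ : g • h • a = h • a)
    rw [← mul_smul, Subgroup.mem_centralizer_iff.1 hh g hg, mul_smul, hga]
  obtain ⟨s, rfl⟩ := exists_smul_eq S a b
  rw [Subgroup.smul_def, ← mul_smul, ← Subgroup.mem_centralizer_iff.1 hh s s.2, mul_smul, ha,
    one_smul]

end PrimitiveGroups

section Groups

variable {G : Type*} [Group G]

theorem two_mul_orderOf_le_card_of_not_commute [Finite G] {g h : G} (hgh : ¬ Commute g h) :
    2 * orderOf g ≤ Nat.card G := by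
  have hh : h ∉ Subgroup.zpowers g := by
    rintro ⟨k, rfl⟩
    exact hgh (Commute.self_zpow g k)
  have hindex : (Subgroup.zpowers g).index ≠ 1 := fun h1 =>
    hh (Subgroup.index_eq_one.1 h1 ▸ Subgroup.mem_top h)
  have hindex' : (Subgroup.zpowers g).index ≠ 0 := Subgroup.index_ne_zero_of_finite
  rw [← (Subgroup.zpowers g).index_mul_card, Nat.card_zpowers]
  exact Nat.mul_le_mul_right _ (by lia)

theorem exists_conj_eq_zpow_of_conj_eq_inv {H : Subgroup G} {g h : G} (hh : h ∈ H)
    (hinv : h * g * h⁻¹ = g⁻¹) (hunits : ∀ v : (ZMod (orderOf g))ˣ, v = 1 ∨ v = -1) (k : ℤ)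
    (hk : Int.gcd k (orderOf g) = 1) : ∃ h ∈ H, h * g * h⁻¹ = g ^ k := by
  have hcast : ((k : ℤ) : ZMod (orderOf g)) = ((1 : ℤ) : ZMod (orderOf g)) ∨
      (k : ZMod (orderOf g)) = ((-1 : ℤ) : ZMod (orderOf g)) := by
    have hcop : IsCoprime k (orderOf g) := Int.isCoprime_iff_gcd_eq_one.2 hk
    rw [← ZMod.coe_unitOfIsCoprime k hcop]
    refine (hunits (ZMod.unitOfIsCoprime k hcop)).imp (fun hv => ?_) (fun hv => ?_) <;> simp [hv]
  simp only [ZMod.intCast_eq_intCast_iff, ← zpow_eq_zpow_iff_modEq] at hcast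
  obtain hone | hneg := hcast
  · exact ⟨1, one_mem H, by simp [hone]⟩
  · exact ⟨h, hh, by rw [hneg, zpow_neg_one, hinv]⟩

theorem exists_simultaneous_conj {H : Subgroup G} {x y z : G} (hxyz : x * y * z = 1)
    (hcentralizer : ∀ g ∈ H, IsConj (x * y) (x * (g * y * g⁻¹)) →
      ∃ w ∈ H, w * x * w⁻¹ = x ∧ w * y * w⁻¹ = g * y * g⁻¹)
    {x' y' z' : G} (hxyz' : x' * y' * z' = 1) (hx : ∃ g ∈ H, g * x * g⁻¹ = x')
    (hy : ∃ g ∈ H, g * y * g⁻¹ = y') (hz : IsConj z z') :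
    ∃ g ∈ H, g * x * g⁻¹ = x' ∧ g * y * g⁻¹ = y' ∧ g * z * g⁻¹ = z' := by
  obtain ⟨a, ha, rfl⟩ := hx
  obtain ⟨b, hb, rfl⟩ := hy
  obtain ⟨e, rfl⟩ := isConj_iff.1 hz
  obtain rfl : z = (x * y)⁻¹ := eq_inv_of_mul_eq_one_right hxyz
  have hconj : a⁻¹ * e * (x * y) * (a⁻¹ * e)⁻¹ = x * (a⁻¹ * b * y * (a⁻¹ * b)⁻¹) := by
    calc a⁻¹ * e * (x * y) * (a⁻¹ * e)⁻¹ = a⁻¹ * (e * (x * y)⁻¹ * e⁻¹)⁻¹ * a := by group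
      _ = a⁻¹ * (a * x * a⁻¹ * (b * y * b⁻¹)) * a := by rw [eq_inv_of_mul_eq_one_left hxyz']
      _ = x * (a⁻¹ * b * y * (a⁻¹ * b)⁻¹) := by group
  obtain ⟨w, hw, hwx, hwy⟩ :=
    hcentralizer (a⁻¹ * b) (mul_mem (inv_mem ha) hb) (isConj_iff.2 ⟨_, hconj⟩)
  have hx : a * w * x * (a * w)⁻¹ = a * x * a⁻¹ := by
    calc a * w * x * (a * w)⁻¹ = a * (w * x * w⁻¹) * a⁻¹ := by group
      _ = a * x * a⁻¹ := by rw [hwx]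
  have hy : a * w * y * (a * w)⁻¹ = b * y * b⁻¹ := by
    calc a * w * y * (a * w)⁻¹ = a * (w * y * w⁻¹) * a⁻¹ := by group
      _ = b * y * b⁻¹ := by rw [hwy]; group
  refine ⟨a * w, mul_mem ha hw, hx, hy, ?_⟩
  rw [eq_inv_of_mul_eq_one_right hxyz', ← hx, ← hy]
  group

theorem exists_mul_of_mem_closure [Finite G] {H K : Subgroup G} {T : Set G}
    (hKT : ∀ k ∈ K, ∀ t ∈ T, ∃ h ∈ H, ∃ k' ∈ K, k * t = h * k') {g : G}
    (hg : g ∈ Subgroup.closure T) : ∃ h ∈ H, ∃ k ∈ K, g = h * k := by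
  rw [← Subgroup.mem_toSubmonoid, Subgroup.closure_toSubmonoid_of_finite] at hg
  induction hg using Submonoid.closure_induction_right with
  | one => exact ⟨1, one_mem H, 1, one_mem K, (one_mul 1).symm⟩
  | mul_right g _ t ht ih =>
    obtain ⟨h, hh, k, hk, rfl⟩ := ih
    obtain ⟨h', hh', k', hk', heq⟩ := hKT k hk t ht
    exact ⟨h * h', mul_mem hh hh', k', hk', by rw [mul_assoc, heq, mul_assoc]⟩

theorem exists_fin_pow_eq_of_mem_zpowers {n : ℕ} [NeZero n] {g h : G} (hg : g ^ n = 1)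
    (hh : h ∈ Subgroup.zpowers g) : ∃ i : Fin n, g ^ (i : ℕ) = h := by
  obtain ⟨k, rfl⟩ := hh
  have hn : (n : ℤ) ≠ 0 := Int.natCast_ne_zero.2 (NeZero.ne n)
  refine ⟨⟨(k % n).toNat, by have := Int.emod_lt_of_pos k (by lia : (0 : ℤ) < n); lia⟩, ?_⟩
  have hg' : g ^ (n : ℤ) = 1 := by rw [zpow_natCast, hg]
  simp only
  rw [← zpow_natCast, Int.toNat_of_nonneg (Int.emod_nonneg k hn), ← zpow_eq_zpow_emod k hg']

theorem inv_mul_conj_mul_inv_eq {g a b : G} (ha : g * a * g⁻¹ = a⁻¹) (hb : g * b * g⁻¹ = b⁻¹) :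
    b⁻¹ * g * (a * b)⁻¹ * (b⁻¹ * g)⁻¹ = (a * b)⁻¹⁻¹ := by
  calc b⁻¹ * g * (a * b)⁻¹ * (b⁻¹ * g)⁻¹
      = b⁻¹ * (g * b * g⁻¹)⁻¹ * (g * a * g⁻¹)⁻¹ * b := by group
    _ = (a * b)⁻¹⁻¹ := by rw [ha, hb]; group

end Groups

namespace NiceTriple55

/-- The map `Fin n → Fin n` whose value at `p` is the `p`-th digit of `N` in base `n`. A whole
function is thus one numeral, which the kernel evaluates by native arithmetic. -/
def digitMap (n : ℕ) [NeZero n] (N : ℕ) (p : Fin n) : Fin n :=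
  Fin.ofNat n (N / n ^ (p : ℕ))

/-- The permutation of `Fin 55` whose values are the base-`55` digits of `N`, those of its inverse
being the digits of `M`. -/
def permOfDigits (N M : ℕ) (leftInv : Function.LeftInverse (digitMap 55 M) (digitMap 55 N))
    (rightInv : Function.RightInverse (digitMap 55 M) (digitMap 55 N)) :
    Equiv.Perm (Fin 55) where
  toFun := digitMap 55 N
  invFun := digitMap 55 M
  left_inv := leftInv
  right_inv := rightInv

/-- The group `⟨x, y⟩`, a copy of `PGL(2, 11)`. -/
abbrev G : Subgroup (Equiv.Perm (Fin 55)) := Subgroup.closure {x, y}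

/-- A square root of `x`, generating a nonsplit torus (cyclic of order `12`) of `G`. -/
def nonsplitGen : Equiv.Perm (Fin 55) := y * x * y * x ^ 3 * y * x ^ 3 * y * x * y

/-- An element of order `11`, generating the unipotent radical of a Borel subgroup of `G`. -/
def unipotentGen : Equiv.Perm (Fin 55) := nonsplitGen * y * x

/-- An element of order `10`, generating a split torus of the Borel subgroup of `G` that contains
`unipotentGen`. -/
def splitGen : Equiv.Perm (Fin 55) := y * x ^ 2

/-- The involution of `G` that inverts `x` and centralizes `y`. -/
def reflection : Equiv.Perm (Fin 55) := unipotentGen * splitGen ^ 5 * nonsplitGen⁻¹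

/-- The elements of the Borel subgroup `⟨unipotentGen, splitGen⟩` of order `110`, in normal form. -/
def borelElt (j : Fin 11) (k : Fin 10) : Equiv.Perm (Fin 55) :=
  unipotentGen ^ (j : ℕ) * splitGen ^ (k : ℕ)

theorem x_eq : x = permOfDigits
    111773563279928952757172621832602581930242879195938122962299549787055204579439511811486314279015
    275276918153196521125808000663692866935988475515911529605031386821947361088535226858922766366171
    (by decide +kernel) (by decide +kernel) := Equiv.ext (by decide +kernel)

theorem y_eq : y = permOfDigits
    387394904410778626877571780058065658507676649640612049226005349360804478743814155132591633505629
    387394904410778626877571780058065658507676649640612049226005349360804478743814155132591633505629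
    (by decide +kernel) (by decide +kernel) := Equiv.ext (by decide +kernel)

theorem nonsplitGen_eq : nonsplitGen = permOfDigits
    381603872017919052243436526863540919565902633500552754012902849775051421090498175032219499386879
    510683720038826846869584269428795616547907573644400242355163840924965915081673015680315574148351
    (by decide +kernel) (by decide +kernel) := by
  rw [nonsplitGen, x_eq, y_eq]
  decide +kernel

theorem unipotentGen_eq : unipotentGen = permOfDigits
    383964725158112125140486944591254644758513837259766891271551698779006274585186842251794990672291
    11529928629179195208134597422029958422596277747479972986008300643112509023779046591945316941231
    (by decide +kernel) (by decide +kernel) := by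
  rw [unipotentGen, nonsplitGen_eq, x_eq, y_eq]
  decide +kernel

theorem splitGen_eq : splitGen = permOfDigits
    270210299430208406009319528086732687105289441281267631394232200697329720523052063602241833974821
    62930895312954028616283100026519844036485542986367383057194345082644984737699077651313940997329
    (by decide +kernel) (by decide +kernel) := by
  rw [splitGen, x_eq, y_eq]
  decide +kernel

theorem nonsplitGen_sq : nonsplitGen ^ 2 = x := by
  rw [nonsplitGen_eq, x_eq]
  decide +kernel

theorem unipotentGen_pow_eleven : unipotentGen ^ 11 = 1 := by
  rw [unipotentGen_eq]
  decide +kernel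

theorem splitGen_pow_ten : splitGen ^ 10 = 1 := by
  rw [splitGen_eq]
  decide +kernel

theorem splitGen_mul_unipotentGen : splitGen * unipotentGen = unipotentGen ^ 7 * splitGen := by
  rw [splitGen_eq, unipotentGen_eq]
  decide +kernel

theorem nonsplitGen_pow_mul_y (i : Fin 12) : ∃ (j : Fin 11) (k : Fin 10) (l : Fin 12),
    nonsplitGen ^ (i : ℕ) * y = borelElt j k * nonsplitGen ^ (l : ℕ) := by
  simp only [borelElt, nonsplitGen_eq, unipotentGen_eq, splitGen_eq, y_eq]
  revert i
  decide +kernel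

theorem reflection_conj_x : reflection * x * reflection⁻¹ = x⁻¹ := by
  rw [reflection, nonsplitGen_eq, unipotentGen_eq, splitGen_eq, x_eq]
  decide +kernel

theorem reflection_conj_y : reflection * y * reflection⁻¹ = y⁻¹ := by
  rw [reflection, nonsplitGen_eq, unipotentGen_eq, splitGen_eq, y_eq]
  decide +kernel

theorem reflection_apply_fourteen : reflection 14 = 14 := by
  rw [reflection, nonsplitGen_eq, unipotentGen_eq, splitGen_eq]
  decide +kernel

theorem nonsplitGen_apply_fourteen : nonsplitGen 14 = 14 := by
  rw [nonsplitGen_eq]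
  decide +kernel

theorem x_sq_apply_eq_self_iff (p : Fin 55) : (x ^ 2) p = p ↔ p = 14 := by
  rw [x_eq]
  revert p
  decide +kernel

theorem exists_borelElt_apply_fourteen (p : Fin 55) : ∃ j k, borelElt j k 14 = p := by
  simp only [borelElt, unipotentGen_eq, splitGen_eq]
  revert p
  decide +kernel

theorem exists_nonsplitGen_pow_conj_y (j : Fin 11) (k : Fin 10) :
    (x * ((borelElt j k)⁻¹ * y * borelElt j k)) ^ 4 = 1 →
    (x * ((borelElt j k)⁻¹ * y * borelElt j k)) ^ 2 ≠ 1 →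
    ∃ l : Fin 12, nonsplitGen ^ (l : ℕ) * y * (nonsplitGen ^ (l : ℕ))⁻¹ =
      (borelElt j k)⁻¹ * y * borelElt j k := by
  simp only [borelElt, nonsplitGen_eq, unipotentGen_eq, splitGen_eq, y_eq, x_eq]
  revert j k
  decide +kernel

/-- The cycles of `(x * y)⁻¹`; the point `55` of the cycle notation is `0 : Fin 55`. -/
def zCycles : List (List (Fin 55)) :=
  [[0, 34, 15, 52], [1, 4, 37, 16], [2, 11, 40, 32], [3, 45], [5, 18, 12, 30], [6, 23],
   [7, 29, 21, 9], [8, 46, 31, 24], [10, 42, 36, 25], [14, 35, 27, 19], [17, 53],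
   [20, 39, 33, 26], [22, 48, 44, 38], [28, 50, 49, 54], [41, 47, 43, 51]]

theorem mul_inv_eq_permOfCycles : (x * y)⁻¹ = permOfCycles zCycles := by
  rw [x_eq, y_eq]
  decide +kernel

theorem cycleType_x : x.cycleType = Multiset.replicate 8 6 + Multiset.replicate 2 3 := by
  rw [x, cycleType_permOfCycles (by decide +kernel) (by decide)]
  decide

theorem cycleType_y : y.cycleType = Multiset.replicate 25 2 := by
  rw [y, cycleType_permOfCycles (by decide +kernel) (by decide)]
  decide

theorem cycleType_mul_inv :
    ((x * y)⁻¹).cycleType = Multiset.replicate 12 4 + Multiset.replicate 3 2 := by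
  rw [mul_inv_eq_permOfCycles, cycleType_permOfCycles (by decide +kernel) (by decide)]
  decide

theorem orderOf_x : orderOf x = 6 := by
  rw [← Equiv.Perm.lcm_cycleType, cycleType_x]
  decide

theorem orderOf_y : orderOf y = 2 := by
  rw [← Equiv.Perm.lcm_cycleType, cycleType_y]
  decide

theorem orderOf_mul_inv : orderOf (x * y)⁻¹ = 4 := by
  rw [← Equiv.Perm.lcm_cycleType, cycleType_mul_inv]
  decide

theorem sign_y : Equiv.Perm.sign y = -1 := by
  rw [Equiv.Perm.sign_of_cycleType, cycleType_y, Multiset.sum_replicate, Multiset.card_replicate]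
  exact Odd.neg_one_pow (by decide)

theorem permInd_add_permInd_add_permInd :
    permInd x + permInd y + permInd (x * y)⁻¹ = 2 * (55 - 1) := by
  rw [permInd, permInd, permInd, cycleType_x, cycleType_y, cycleType_mul_inv]
  simp

theorem nonsplitGen_pow_twelve : nonsplitGen ^ 12 = 1 := by
  rw [show 12 = 2 * orderOf x by rw [orderOf_x], pow_mul, nonsplitGen_sq, pow_orderOf_eq_one]

theorem orderOf_nonsplitGen : orderOf nonsplitGen = 12 := by
  have hdvd : orderOf nonsplitGen ∣ 12 := orderOf_dvd_of_pow_eq_one nonsplitGen_pow_twelve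
  have hsq := orderOf_pow nonsplitGen (n := 2)
  rw [nonsplitGen_sq, orderOf_x] at hsq
  have harith : ∀ m ≤ 12, m ∣ 12 → 6 = m / m.gcd 2 → m = 12 := by decide
  exact harith _ (Nat.le_of_dvd (by lia) hdvd) hdvd hsq

theorem x_mem : x ∈ G := Subgroup.subset_closure (Set.mem_insert x {y})

theorem y_mem : y ∈ G := Subgroup.subset_closure (Set.mem_insert_of_mem x (Set.mem_singleton y))

theorem nonsplitGen_mem : nonsplitGen ∈ G :=
  have hyx : y * x ∈ G := mul_mem y_mem x_mem
  have hx3 : x ^ 3 ∈ G := pow_mem x_mem 3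
  mul_mem (mul_mem (mul_mem (mul_mem (mul_mem (mul_mem (mul_mem hyx y_mem) hx3) y_mem) hx3) y_mem)
    x_mem) y_mem

theorem unipotentGen_mem : unipotentGen ∈ G :=
  mul_mem (mul_mem nonsplitGen_mem y_mem) x_mem

theorem splitGen_mem : splitGen ∈ G := mul_mem y_mem (pow_mem x_mem 2)

theorem reflection_mem : reflection ∈ G :=
  mul_mem (mul_mem unipotentGen_mem (pow_mem splitGen_mem 5)) (inv_mem nonsplitGen_mem)

theorem borelElt_mem (j : Fin 11) (k : Fin 10) : borelElt j k ∈ G :=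
  mul_mem (pow_mem unipotentGen_mem _) (pow_mem splitGen_mem _)

theorem not_commute_nonsplitGen_reflection : ¬ Commute nonsplitGen reflection := by
  intro hcomm
  have hx : Commute x reflection := nonsplitGen_sq ▸ hcomm.pow_left 2
  have hinv : x⁻¹ = x := by rw [← reflection_conj_x, ← hx.eq, mul_inv_cancel_right]
  have hdvd : orderOf x ∣ 2 := orderOf_dvd_of_pow_eq_one (by nth_rw 1 [sq, ← hinv, inv_mul_cancel])
  rw [orderOf_x] at hdvd
  lia

theorem splitGen_zpow_conj_unipotentGen (k : ℤ) :
    splitGen ^ k * unipotentGen * (splitGen ^ k)⁻¹ ∈ Subgroup.zpowers unipotentGen := by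
  have hnormalizer : splitGen ∈ Subgroup.normalizer (Subgroup.zpowers unipotentGen) := by
    refine Subgroup.mem_normalizer_fintype fun v hv => ?_
    obtain ⟨m, rfl⟩ := hv
    rw [← conj_zpow, splitGen_mul_unipotentGen, mul_inv_cancel_right]
    exact zpow_mem (Subgroup.npow_mem_zpowers _ 7) m
  exact (Subgroup.mem_normalizer_iff.1 (zpow_mem hnormalizer k) _).1 (Subgroup.mem_zpowers _)

theorem exists_borelElt_eq_of_mem_closure {b : Equiv.Perm (Fin 55)}
    (hb : b ∈ Subgroup.closure {unipotentGen, splitGen}) : ∃ j k, borelElt j k = b := by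
  have hexchange : ∀ d ∈ Subgroup.zpowers splitGen,
      ∀ t ∈ ({unipotentGen, splitGen} : Set (Equiv.Perm (Fin 55))),
      ∃ v ∈ Subgroup.zpowers unipotentGen, ∃ d' ∈ Subgroup.zpowers splitGen, d * t = v * d' := by
    rintro d hd t (rfl | rfl)
    · obtain ⟨k, rfl⟩ := hd
      exact ⟨_, splitGen_zpow_conj_unipotentGen k, _, ⟨k, rfl⟩, by group⟩
    · exact ⟨1, one_mem _, _, mul_mem hd (Subgroup.mem_zpowers _), (one_mul _).symm⟩
  obtain ⟨_, hu, _, hd, rfl⟩ := exists_mul_of_mem_closure hexchange hb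
  obtain ⟨j, rfl⟩ := exists_fin_pow_eq_of_mem_zpowers unipotentGen_pow_eleven hu
  obtain ⟨k, rfl⟩ := exists_fin_pow_eq_of_mem_zpowers splitGen_pow_ten hd
  exact ⟨j, k, rfl⟩

theorem borelElt_mem_closure (j : Fin 11) (k : Fin 10) :
    borelElt j k ∈ Subgroup.closure {unipotentGen, splitGen} :=
  mul_mem (pow_mem (Subgroup.subset_closure (Set.mem_insert _ _)) _)
    (pow_mem (Subgroup.subset_closure (Set.mem_insert_of_mem _ (Set.mem_singleton _))) _)

theorem exists_borelElt_mul_nonsplitGen_pow {g : Equiv.Perm (Fin 55)} (hg : g ∈ G) :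
    ∃ j k, ∃ i : Fin 12, borelElt j k * nonsplitGen ^ (i : ℕ) = g := by
  have hexchange : ∀ c ∈ Subgroup.zpowers nonsplitGen,
      ∀ t ∈ ({x, y} : Set (Equiv.Perm (Fin 55))),
      ∃ b ∈ Subgroup.closure {unipotentGen, splitGen}, ∃ c' ∈ Subgroup.zpowers nonsplitGen,
        c * t = b * c' := by
    rintro c hc t (rfl | rfl)
    · have hx : x ∈ Subgroup.zpowers nonsplitGen := nonsplitGen_sq ▸ Subgroup.npow_mem_zpowers _ 2
      exact ⟨1, one_mem _, _, mul_mem hc hx, (one_mul _).symm⟩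
    · obtain ⟨i, rfl⟩ := exists_fin_pow_eq_of_mem_zpowers nonsplitGen_pow_twelve hc
      obtain ⟨j, k, l, heq⟩ := nonsplitGen_pow_mul_y i
      exact ⟨_, borelElt_mem_closure j k, _, Subgroup.npow_mem_zpowers _ l, heq⟩
  obtain ⟨_, hb, _, hc, rfl⟩ := exists_mul_of_mem_closure hexchange hg
  obtain ⟨j, k, rfl⟩ := exists_borelElt_eq_of_mem_closure hb
  obtain ⟨i, rfl⟩ := exists_fin_pow_eq_of_mem_zpowers nonsplitGen_pow_twelve hc
  exact ⟨j, k, i, rfl⟩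

instance isPretransitive_G : MulAction.IsPretransitive G (Fin 55) := by
  refine (MulAction.isPretransitive_iff_base 14).2 fun p => ?_
  obtain ⟨j, k, hp⟩ := exists_borelElt_apply_fourteen p
  exact ⟨⟨borelElt j k, borelElt_mem j k⟩, hp⟩

theorem card_G_le : Nat.card G ≤ 1320 := by
  have hsurj : Function.Surjective fun q : Fin 11 × Fin 10 × Fin 12 =>
      (⟨borelElt q.1 q.2.1 * nonsplitGen ^ (q.2.2 : ℕ),
        mul_mem (borelElt_mem _ _) (pow_mem nonsplitGen_mem _)⟩ : G) := fun g => by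
    obtain ⟨j, k, i, hg⟩ := exists_borelElt_mul_nonsplitGen_pow g.2
    exact ⟨(j, k, i), Subtype.ext hg⟩
  simpa using Nat.card_le_card_of_surjective _ hsurj

theorem le_card_stabilizer : 24 ≤ Nat.card (MulAction.stabilizer G (14 : Fin 55)) := by
  let c : MulAction.stabilizer G (14 : Fin 55) :=
    ⟨⟨nonsplitGen, nonsplitGen_mem⟩, nonsplitGen_apply_fourteen⟩
  let s : MulAction.stabilizer G (14 : Fin 55) :=
    ⟨⟨reflection, reflection_mem⟩, reflection_apply_fourteen⟩
  have hcomm : ¬ Commute c s := fun h =>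
    not_commute_nonsplitGen_reflection ((h.map (Subgroup.subtype _)).map (Subgroup.subtype _))
  have hc : orderOf c = 12 := by
    rw [← Subgroup.orderOf_coe, ← Subgroup.orderOf_coe, orderOf_nonsplitGen]
  simpa [hc] using two_mul_orderOf_le_card_of_not_commute hcomm

theorem card_G : Nat.card G = 1320 := by
  refine card_G_le.antisymm ?_
  rw [← (MulAction.stabilizer G (14 : Fin 55)).card_mul_index,
    MulAction.index_stabilizer_of_transitive, Nat.card_eq_fintype_card (α := Fin 55),
    Fintype.card_fin]
  exact Nat.mul_le_mul_right 55 le_card_stabilizer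

/-- The even permutations in `G`, a copy of `PSL(2, 11)`. -/
abbrev S : Subgroup G := (Equiv.Perm.sign.comp G.subtype).ker

theorem card_S : Nat.card S = 660 := by
  have hrange : (Equiv.Perm.sign.comp G.subtype).range = ⊤ := by
    refine MonoidHom.range_eq_top.2 fun v => ?_
    obtain rfl | rfl := Int.units_eq_one_or v
    · exact ⟨1, map_one _⟩
    · exact ⟨⟨y, y_mem⟩, by rw [MonoidHom.comp_apply, Subgroup.subtype_apply, sign_y]⟩
  have hindex : S.index = 2 := by
    rw [Subgroup.index_ker, hrange, Subgroup.card_top]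
    simp
  have hcard := S.card_mul_index
  rw [hindex, card_G] at hcard
  lia

/-- `x ^ 2` as an element of `S`. -/
def xSq : S := ⟨⟨x ^ 2, pow_mem x_mem 2⟩, by simp [MonoidHom.mem_ker]⟩

theorem fixedBy_xSq : MulAction.fixedBy (Fin 55) (xSq : G) = {14} :=
  Set.ext x_sq_apply_eq_self_iff

theorem xSq_pow_three : xSq ^ 3 ^ 1 = 1 := by
  refine Subtype.ext (Subtype.ext ?_)
  change (x ^ 2) ^ 3 = 1
  rw [← pow_mul, ← orderOf_dvd_iff_pow_eq_one, orderOf_x]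

theorem eq_one_or_eq_card_of_dvd_of_modEq (m : ℕ) (hdvd : m ∣ Nat.card (Fin 55))
    (hmod : m ≡ 1 [MOD 3]) : m = 1 ∨ m = Nat.card (Fin 55) := by
  have harith : ∀ m ≤ 55, m ∣ 55 → m % 3 = 1 → m = 1 ∨ m = 55 := by decide
  rw [Nat.card_fin] at hdvd ⊢
  exact harith m (Nat.le_of_dvd (by lia) hdvd) hdvd hmod

instance isPreprimitive_G : MulAction.IsPreprimitive G (Fin 55) :=
  isPreprimitive_of_fixedBy_eq_singleton (p := 3) (k := 1) (congrArg Subtype.val xSq_pow_three)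
    fixedBy_xSq eq_one_or_eq_card_of_dvd_of_modEq

theorem S_ne_bot : S ≠ ⊥ := by
  intro hbot
  have hcard := card_S
  rw [hbot, Subgroup.card_bot] at hcard
  lia

instance isPretransitive_S : MulAction.IsPretransitive S (Fin 55) :=
  isPretransitive_of_normal_of_ne_bot S_ne_bot

instance isPreprimitive_S : MulAction.IsPreprimitive S (Fin 55) :=
  isPreprimitive_of_fixedBy_eq_singleton xSq_pow_three fixedBy_xSq
    eq_one_or_eq_card_of_dvd_of_modEq

theorem not_isPrimePow_fiftyFive : ¬ IsPrimePow 55 := fun h => by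
  obtain ⟨p, -, hunique⟩ := isPrimePow_iff_unique_prime_dvd.1 h
  have := (hunique 5 (by norm_num)).trans (hunique 11 (by norm_num)).symm
  lia

theorem isSimpleGroup_S : IsSimpleGroup S := by
  have : Fact (Nat.Prime 11) := ⟨by norm_num⟩
  refine isSimpleGroup_of_isQuasiPreprimitive (X := Fin 55) (p := 11) ?_ ?_ ?_
  · exact ⟨5, Nat.card_fin 55⟩
  · rw [Nat.card_fin]
    exact not_isPrimePow_fiftyFive
  · have harith : ∀ m ≤ 660, m ∣ 660 → m % 11 = 1 → m ≠ 1 → 660 ∣ Nat.lcm 55 m := by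
      decide +kernel
    rw [card_S, Nat.card_fin]
    exact fun m hdvd => harith m (Nat.le_of_dvd (by lia) hdvd) hdvd

theorem centralizer_S : Subgroup.centralizer (S : Set G) = ⊥ :=
  centralizer_eq_bot_of_fixedBy_eq_singleton xSq.2 fixedBy_xSq

theorem exists_mul_ne_mul_S : ∃ a b : S, a * b ≠ b * a := by
  by_contra! hcomm
  refine S_ne_bot (eq_bot_iff.2 (centralizer_S ▸ fun a ha => ?_))
  exact Subgroup.mem_centralizer_iff.2 fun b hb =>
    congrArg Subtype.val (hcomm ⟨b, hb⟩ ⟨a, ha⟩)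

theorem G_ne_alternatingGroup : G ≠ alternatingGroup (Fin 55) := by
  intro heq
  have hy : Equiv.Perm.sign y = 1 := Equiv.Perm.mem_alternatingGroup.1 (heq ▸ y_mem)
  rw [sign_y] at hy
  exact absurd hy (by decide)

theorem G_ne_top : G ≠ ⊤ := by
  intro heq
  have hcard := card_G
  rw [heq, Subgroup.card_top, Nat.card_perm, Nat.card_fin] at hcard
  exact absurd hcard (by decide +kernel)

theorem orderOf_eq_four_of_isConj {g : Equiv.Perm (Fin 55)} (hg : IsConj (x * y) g) :
    orderOf g = 4 := by
  rw [← Equiv.Perm.lcm_cycleType, ← Equiv.Perm.isConj_iff_cycleType_eq.1 hg,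
    Equiv.Perm.lcm_cycleType, ← orderOf_inv, orderOf_mul_inv]

theorem nonsplitGen_zpow_conj_x (m : ℤ) : nonsplitGen ^ m * x * (nonsplitGen ^ m)⁻¹ = x := by
  rw [← nonsplitGen_sq]
  group

theorem exists_centralizing_conj_y {g : Equiv.Perm (Fin 55)} (hg : g ∈ G)
    (hconj : IsConj (x * y) (x * (g * y * g⁻¹))) :
    ∃ w ∈ G, w * x * w⁻¹ = x ∧ w * y * w⁻¹ = g * y * g⁻¹ := by
  obtain ⟨j, k, i, hginv⟩ := exists_borelElt_mul_nonsplitGen_pow (inv_mem hg)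
  set b := borelElt j k with hb
  obtain rfl : g = (b * nonsplitGen ^ (i : ℕ))⁻¹ := by rw [hginv, inv_inv]
  have hconj' : IsConj (x * y) (x * (b⁻¹ * y * b)) := by
    refine hconj.trans (isConj_iff.2 ⟨nonsplitGen ^ (i : ℤ), ?_⟩)
    nth_rw 2 [← nonsplitGen_zpow_conj_x i]
    group
  have horder : orderOf (x * (b⁻¹ * y * b)) = 4 := orderOf_eq_four_of_isConj hconj'
  obtain ⟨l, hl⟩ := exists_nonsplitGen_pow_conj_y j k (horder ▸ pow_orderOf_eq_one _)
    (fun hsq => absurd (horder ▸ orderOf_dvd_of_pow_eq_one hsq) (by decide))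
  refine ⟨nonsplitGen ^ (l - i : ℤ), zpow_mem nonsplitGen_mem _, nonsplitGen_zpow_conj_x _, ?_⟩
  calc nonsplitGen ^ (l - i : ℤ) * y * (nonsplitGen ^ (l - i : ℤ))⁻¹
      = (nonsplitGen ^ (i : ℕ))⁻¹ * (nonsplitGen ^ (l : ℕ) * y * (nonsplitGen ^ (l : ℕ))⁻¹) *
          nonsplitGen ^ (i : ℕ) := by group
    _ = (b * nonsplitGen ^ (i : ℕ))⁻¹ * y * (b * nonsplitGen ^ (i : ℕ))⁻¹⁻¹ := by
      rw [hl, ← hb]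
      group

theorem exists_conj_eq_zpow {g : Equiv.Perm (Fin 55)}
    (hg : g ∈ ({x, y, (x * y)⁻¹} : Set (Equiv.Perm (Fin 55)))) (k : ℤ)
    (hk : Int.gcd k (orderOf g) = 1) : ∃ h ∈ G, h * g * h⁻¹ = g ^ k := by
  obtain rfl | rfl | rfl := hg
  · exact exists_conj_eq_zpow_of_conj_eq_inv reflection_mem reflection_conj_x
      (by rw [orderOf_x]; decide) k hk
  · exact exists_conj_eq_zpow_of_conj_eq_inv reflection_mem reflection_conj_y
      (by rw [orderOf_y]; decide) k hk
  · exact exists_conj_eq_zpow_of_conj_eq_inv (mul_mem (inv_mem y_mem) reflection_mem)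
      (inv_mul_conj_mul_inv_eq reflection_conj_x reflection_conj_y)
      (by rw [orderOf_mul_inv]; decide) k hk

end NiceTriple55

theorem nice_triple_deg55_stmt3 :
    IsNice x y (x * y)⁻¹ ∧
    x.cycleType = Multiset.replicate 8 6 + Multiset.replicate 2 3 ∧
    y.cycleType = Multiset.replicate 25 2 ∧
    ((x * y)⁻¹).cycleType = Multiset.replicate 12 4 + Multiset.replicate 3 2 ∧
    Nat.card ↥(Subgroup.closure {x, y} : Subgroup (Equiv.Perm (Fin 55))) = 1320 := by
  open NiceTriple55 in
  refine ⟨⟨mul_inv_cancel _, ⟨G_ne_alternatingGroup, G_ne_top⟩, ?primitive, ?almostSimple,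
    permInd_add_permInd_add_permInd, ?rigid, fun g hg => exists_conj_eq_zpow hg⟩,
    cycleType_x, cycleType_y, cycleType_mul_inv, card_G⟩
  case primitive =>
    exact ⟨inferInstance, fun _ => MulAction.IsPreprimitive.isTrivialBlock_of_isBlock⟩
  case almostSimple =>
    exact ⟨S, inferInstance, isSimpleGroup_S, exists_mul_ne_mul_S, centralizer_S⟩
  case rigid =>
    intro x' y' z' hxyz' _ hx hy ⟨g, _, hz⟩
    exact exists_simultaneous_conj (mul_inv_cancel _) (fun _ => exists_centralizing_conj_y)
      hxyz' hx hy (isConj_iff.2 ⟨g, hz⟩)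
end

section
/- With p, q ∈ ℚ[X] as in the context (the first Belyi map of degree 55 for PGL(2,11)), the polynomial F = p − t·q ∈ K[X] has degree 55, is irreducible over K = ℚ(t), and its Galois group Polynomial.Gal F (the Galois group of the splitting field of F over K) has cardinality 1320, the order of PGL(2,11). -/
open Polynomial

noncomputable section

def q : Polynomial ℚ :=
    11 ^ 4 * (2 * X + 1) * (176 * X ^ 3 + 1056 * X ^ 2 + 330 * X + 31) ^ 4 * (264 * X ^ 3 +
    154 * X ^ 2 + 22 * X + 1) ^ 4 * (352 * X ^ 3 + 264 * X ^ 2 + 99 * X + 14) ^ 4 * (704 * X ^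
    3 + 132 * X ^ 2 + 1) ^ 4 * (1408 * X ^ 3 + 693 * X ^ 2 + 132 * X + 8) ^ 2

def r : Polynomial ℚ :=
    -16 * (22 * X ^ 2 - 11 * X - 2) ^ 6 * (44 * X ^ 2 + 22 * X + 3) ^ 6 * (88 * X ^ 2 + 55 * X
    + 1) ^ 6 * (176 * X ^ 2 + 44 * X + 5) ^ 6 * (704 * X ^ 2 + 242 * X + 17) ^ 3

def p : Polynomial ℚ := q + r

/-- `F = p − t·q ∈ K[X]` where `K = ℚ(t)` and `t = RatFunc.X`. -/
def F : Polynomial (RatFunc ℚ) :=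
  p.map (algebraMap ℚ (RatFunc ℚ)) - Polynomial.C RatFunc.X * q.map (algebraMap ℚ (RatFunc ℚ))

end

/-!
A root of `F` is a point `x` with `(r / q)(x) = t - 1`. The polynomial `r(x) q(y) - q(x) r(y)` is
divisible by `x - y` and by a symmetric factor of degree `6` in each variable, which defines a
`6`-valent graph on the `55` roots that is preserved by the Galois group. Choosing transcendental
`l`-adic integers `t` embeds the splitting field of `F` into the algebraic closure of `ℚ_l`, and
Hensel's lemma reduces the following to computations modulo `l`.

* For `l = 461` and `t ≡ 102` all roots are `l`-adic; the graph is the commuting graph of the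
  involutions of `PSL(2, 11)`. In it only the identity fixes an arc together with a suitable third
  vertex, and that vertex has at most `4` images under the stabilizer of the arc.
* For `l = 13` and `t ≡ 3` there is an `l`-adic root whose six neighbours are conjugate over `ℚ_l`,
  so the Galois group is transitive on the `55 * 6` arcs.
* For `l = 29` and `t ≡ 9` there is an `l`-adic root all of whose neighbours are `l`-adic, although
  some other root is not. So a nontrivial automorphism fixes a vertex and its neighbours; conjugates
  of it at the two ends of an arc generate at least `4` elements fixing the arc.

Hence the Galois group has order `55 * 6 * 4 = 1320`. Irreducibility follows from Gauss's lemma,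
since `F` is linear in `t` with coprime coefficients.
-/

namespace Belyi55

section GraphAction

variable {V G : Type*} [Group G] [MulAction G V] {N : V → Finset V}

/-- The action of `G` on `V` preserves the digraph whose out-neighbourhoods are given by `N`. -/
def ActsByAutomorphisms (G : Type*) [Group G] [MulAction G V] (N : V → Finset V) : Prop :=
  ∀ (g : G) (u v : V), g • v ∈ N (g • u) ↔ v ∈ N u

/-- The number of walks of length `n` from `u` to `v` in the digraph whose out-neighbourhoods are
given by `N`. It is preserved by automorphisms and quick to evaluate, so it serves to tell vertices
apart. -/
def walkCount [DecidableEq V] (N : V → Finset V) : ℕ → V → V → ℕ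
  | 0, u, v => if u = v then 1 else 0
  | n + 1, u, v => ∑ w ∈ N u, walkCount N n w v

theorem walkCount_smul_smul [DecidableEq V] (hN : ActsByAutomorphisms G N)
    (g : G) (n : ℕ) (u v : V) : walkCount N n (g • u) (g • v) = walkCount N n u v := by
  induction n generalizing u with
  | zero => simp only [walkCount, smul_left_cancel_iff]
  | succ n ih =>
    refine (Finset.sum_bij (fun w _ => g • w) (fun w hw => (hN g u w).2 hw)
      (fun _ _ _ _ h => smul_left_cancel g h) (fun w hw => ⟨g⁻¹ • w, ?_, smul_inv_smul g w⟩)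
      fun w _ => (ih w).symm).symm
    rwa [← hN g, smul_inv_smul]

theorem map_walkCount_smul [DecidableEq V] (hN : ActsByAutomorphisms G N)
    {g : G} {S : List V} (hS : ∀ s ∈ S, g • s = s) (n : ℕ) (v : V) :
    S.map (walkCount N n (g • v)) = S.map (walkCount N n v) := by
  refine List.map_congr_left fun s hs => ?_
  conv_lhs => rw [← hS s hs]
  exact walkCount_smul_smul hN g n v s

theorem smul_eq_self_of_walkCount [DecidableEq V]
    (hN : ActsByAutomorphisms G N) {g : G} {n : ℕ} {S : List V} {v : V}
    (hS : ∀ s ∈ S, g • s = s)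
    (hv : ∀ w, S.map (walkCount N n w) = S.map (walkCount N n v) → w = v) : g • v = v :=
  hv _ (map_walkCount_smul hN hS n v)

variable [MulAction.IsPretransitive G V]

theorem orbit_eq_arcs (hN : ActsByAutomorphisms G N)
    (hloc : ∃ u, ∀ v ∈ N u, ∀ w ∈ N u, ∃ g : G, g • u = u ∧ g • v = w) {u v : V} (huv : v ∈ N u) :
    MulAction.orbit G (u, v) = {a | a.2 ∈ N a.1} := by
  ext ⟨u', v'⟩
  constructor
  · rintro ⟨g, hg⟩
    obtain ⟨rfl, rfl⟩ := Prod.mk.inj hg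
    exact (hN g u v).2 huv
  · intro huv'
    obtain ⟨o, ho⟩ := hloc
    obtain ⟨g, hg⟩ := MulAction.exists_smul_eq G u o
    obtain ⟨g', hg'⟩ := MulAction.exists_smul_eq G u' o
    obtain ⟨k, hk, hkv⟩ := ho (g • v) (hg ▸ (hN g u v).2 huv) (g' • v') (hg' ▸ (hN g' u' v').2 huv')
    refine ⟨g'⁻¹ * k * g, Prod.ext ?_ ?_⟩
    · simp only [mul_smul, Prod.smul_mk, hg, hk, inv_smul_eq_iff, hg']
    · simp only [mul_smul, Prod.smul_mk, hkv, inv_smul_smul]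

theorem exists_ne_one_fixing_closedNeighborhood
    (hN : ActsByAutomorphisms G N)
    (hfix : ∃ u, ∃ g : G, g ≠ 1 ∧ g • u = u ∧ ∀ v ∈ N u, g • v = v) (u : V) :
    ∃ g : G, g ≠ 1 ∧ g • u = u ∧ ∀ v ∈ N u, g • v = v := by
  obtain ⟨o, g, hg, hgo, hgN⟩ := hfix
  obtain ⟨k, rfl⟩ := MulAction.exists_smul_eq G o u
  refine ⟨k * g * k⁻¹, by simpa using hg, by simp only [mul_smul, inv_smul_smul, hgo], ?_⟩
  intro v hv
  have hv' : k⁻¹ • v ∈ N o := by rwa [← hN k, smul_inv_smul]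
  simp only [mul_smul, hgN _ hv', smul_inv_smul]

end GraphAction

/-- The neighbours of each vertex in the commuting graph of the 55 involutions of `PSL(2, 11)`,
whose automorphism group is `PGL(2, 11)`. The numbering is that of `rootsMod461`. -/
def neighbors : Fin 55 → Finset (Fin 55) :=
  ![{10, 11, 29, 39, 42, 54}, {2, 18, 20, 24, 31, 47}, {1, 3, 8, 23, 46, 47},
    {2, 8, 12, 37, 39, 40}, {6, 17, 35, 37, 38, 41}, {9, 10, 17, 23, 27, 49},
    {4, 7, 25, 35, 46, 50}, {6, 31, 39, 44, 46, 51}, {2, 3, 13, 14, 49, 53},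
    {5, 18, 22, 26, 35, 49}, {0, 5, 23, 28, 29, 50}, {0, 22, 39, 47, 48, 52},
    {3, 27, 30, 33, 36, 39}, {8, 21, 27, 29, 44, 53}, {8, 19, 33, 38, 48, 49},
    {17, 34, 36, 43, 47, 51}, {30, 31, 34, 41, 49, 54}, {4, 5, 15, 27, 37, 47},
    {1, 9, 19, 20, 35, 51}, {14, 18, 28, 30, 48, 51}, {1, 18, 32, 33, 50, 53},
    {13, 24, 25, 27, 34, 45}, {9, 11, 26, 28, 45, 47}, {2, 5, 10, 41, 46, 52},
    {1, 21, 31, 42, 43, 45}, {6, 21, 34, 40, 48, 50}, {9, 22, 38, 40, 42, 44},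
    {5, 12, 13, 17, 21, 30}, {10, 19, 22, 30, 45, 50}, {0, 10, 13, 35, 36, 44},
    {12, 16, 19, 27, 28, 54}, {1, 7, 16, 24, 44, 49}, {20, 33, 37, 45, 46, 54},
    {12, 14, 20, 32, 36, 38}, {15, 16, 21, 25, 41, 51}, {4, 6, 9, 18, 29, 36},
    {12, 15, 29, 33, 35, 43}, {3, 4, 17, 32, 40, 45}, {4, 14, 26, 33, 41, 42},
    {0, 3, 7, 11, 12, 51}, {3, 25, 26, 37, 44, 48}, {4, 16, 23, 34, 38, 52},
    {0, 24, 26, 38, 43, 54}, {15, 24, 36, 42, 52, 53}, {7, 13, 26, 29, 31, 40},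
    {21, 22, 24, 28, 32, 37}, {2, 6, 7, 23, 32, 54}, {1, 2, 11, 15, 17, 22},
    {11, 14, 19, 25, 40, 52}, {5, 8, 9, 14, 16, 31}, {6, 10, 20, 25, 28, 53},
    {7, 15, 18, 19, 34, 39}, {11, 23, 41, 43, 48, 53}, {8, 13, 20, 43, 50, 52},
    {0, 16, 30, 32, 42, 46}]

theorem walkCount_neighbors_injective (v : Fin 55) :
    ∀ w, [0, 7, 10, 27, 42, 44].map (walkCount neighbors 4 w) =
      [0, 7, 10, 27, 42, 44].map (walkCount neighbors 4 v) → w = v := by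
  revert v
  decide +kernel

theorem card_arcs_neighbors : {a : Fin 55 × Fin 55 | a.2 ∈ neighbors a.1}.ncard = 330 := by
  rw [← Finset.coe_filter_univ, Set.ncard_coe_finset]
  decide +kernel

section CardOfAction

variable {G : Type*} [Group G] [MulAction G (Fin 55)]

theorem smul_eq_self_of_fixes_zero_six_ten
    (hN : ActsByAutomorphisms G neighbors) {g : G}
    (h0 : g • (0 : Fin 55) = 0) (h6 : g • (6 : Fin 55) = 6) (h10 : g • (10 : Fin 55) = 10)
    (i : Fin 55) : g • i = i := by
  have hS : ∀ s ∈ ([0, 6, 10] : List (Fin 55)), g • s = s := by simp [h0, h6, h10]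
  have hT : ∀ s ∈ ([0, 7, 10, 27, 42, 44] : List (Fin 55)), ∀ w,
      [0, 6, 10].map (walkCount neighbors 4 w) = [0, 6, 10].map (walkCount neighbors 4 s) →
        w = s := by decide +kernel
  exact smul_eq_self_of_walkCount hN (fun s hs => smul_eq_self_of_walkCount hN hS (hT s hs))
    (walkCount_neighbors_injective i)

theorem smul_eq_self_of_fixes_neighbors_zero_ten
    (hN : ActsByAutomorphisms G neighbors) {g : G}
    (h0 : ∀ j ∈ neighbors 0, g • j = j) (h10 : ∀ j ∈ neighbors 10, g • j = j) (i : Fin 55) :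
    g • i = i := by
  have hS : ∀ s ∈ ([0, 5, 10, 11, 23, 28, 29, 39, 42, 50, 54] : List (Fin 55)), g • s = s := by
    have : ∀ s ∈ ([0, 5, 10, 11, 23, 28, 29, 39, 42, 50, 54] : List (Fin 55)),
        s ∈ neighbors 0 ∨ s ∈ neighbors 10 := by decide +kernel
    exact fun s hs => (this s hs).elim (h0 s) (h10 s)
  have h6 : g • (6 : Fin 55) = 6 := smul_eq_self_of_walkCount (n := 4) hN hS (by decide +kernel)
  exact smul_eq_self_of_fixes_zero_six_ten hN (hS 0 (by simp)) h6 (hS 10 (by simp)) i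

variable [FaithfulSMul G (Fin 55)]

theorem card_stabilizer_arc_le
    (hN : ActsByAutomorphisms G neighbors) :
    Nat.card (MulAction.stabilizer G ((0, 10) : Fin 55 × Fin 55)) ≤ 4 := by
  have hfix : ∀ g ∈ MulAction.stabilizer G ((0, 10) : Fin 55 × Fin 55),
      g • (0 : Fin 55) = 0 ∧ g • (10 : Fin 55) = 10 := fun g hg => Prod.mk.inj hg
  have hcandidates : ∀ i : Fin 55, [0, 10].map (walkCount neighbors 4 i) =
      [0, 10].map (walkCount neighbors 4 6) → i ∈ ({6, 9, 27, 53} : Finset (Fin 55)) := by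
    decide +kernel
  let orbitMap : MulAction.stabilizer G ((0, 10) : Fin 55 × Fin 55) →
      ({6, 9, 27, 53} : Finset (Fin 55)) := fun g => ⟨g • 6, hcandidates _ <|
    map_walkCount_smul hN (g := (g : G)) (by simp [hfix g g.2]) 4 6⟩
  have hinj : Function.Injective orbitMap := by
    intro g h hgh
    have h6 : (h⁻¹ * g) • (6 : Fin 55) = 6 := by
      rw [mul_smul, inv_smul_eq_iff]
      exact congrArg Subtype.val hgh
    obtain ⟨h0, h10⟩ := hfix _ (h⁻¹ * g).2
    have hone : ((h⁻¹ * g : MulAction.stabilizer G ((0, 10) : Fin 55 × Fin 55)) : G) = 1 :=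
      eq_of_smul_eq_smul fun i : Fin 55 => by
        rw [smul_eq_self_of_fixes_zero_six_ten hN h0 h6 h10, one_smul]
    exact (inv_mul_eq_one.1 (Subtype.ext hone)).symm
  calc _ ≤ Nat.card ({6, 9, 27, 53} : Finset (Fin 55)) :=
        Nat.card_le_card_of_injective orbitMap hinj
    _ = 4 := by rw [Nat.card_eq_fintype_card, Fintype.card_coe]; rfl

/-- The pointwise stabilizers of the closed neighbourhoods of `0` and of `10` fix the arc `(0, 10)`
and intersect trivially, so their product set has at least `2 * 2` elements. -/
theorem le_card_stabilizer_arc [Finite G] [MulAction.IsPretransitive G (Fin 55)]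
    (hN : ActsByAutomorphisms G neighbors)
    (hfix : ∃ i, ∃ g : G, g ≠ 1 ∧ g • i = i ∧ ∀ j ∈ neighbors i, g • j = j) :
    4 ≤ Nat.card (MulAction.stabilizer G ((0, 10) : Fin 55 × Fin 55)) := by
  let A (i : Fin 55) : Subgroup G := fixingSubgroup G (insert i (neighbors i : Set (Fin 55)))
  have hA {i : Fin 55} {g : G} : g ∈ A i ↔ g • i = i ∧ ∀ j ∈ neighbors i, g • j = j := by
    simp [A, mem_fixingSubgroup_iff]
  have htwo (i : Fin 55) : 2 ≤ Nat.card (A i) := by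
    obtain ⟨g, hg, hgA⟩ := exists_ne_one_fixing_closedNeighborhood hN hfix i
    have : Nontrivial (A i) := ⟨⟨g, hA.2 hgA⟩, 1, fun h => hg (congrArg Subtype.val h)⟩
    exact Finite.one_lt_card
  have hdisj : Disjoint (A 0) (A 10) := by
    refine Subgroup.disjoint_def.2 fun {g} h0 h10 => eq_of_smul_eq_smul fun i : Fin 55 => ?_
    rw [smul_eq_self_of_fixes_neighbors_zero_ten hN (hA.1 h0).2 (hA.1 h10).2, one_smul]
  have hstab (x : A 0 × A 10) :
      (x.1 * x.2 : G) ∈ MulAction.stabilizer G ((0, 10) : Fin 55 × Fin 55) := by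
    have h0 := hA.1 x.1.2
    have h10 := hA.1 x.2.2
    refine mul_mem (Prod.ext h0.1 (h0.2 10 (by decide +kernel)))
      (Prod.ext (h10.2 0 (by decide +kernel)) h10.1)
  calc 4 ≤ Nat.card (A 0) * Nat.card (A 10) := Nat.mul_le_mul (htwo 0) (htwo 10)
    _ = Nat.card (A 0 × A 10) := Nat.card_prod _ _ |>.symm
    _ ≤ _ := Nat.card_le_card_of_injective (fun x => ⟨_, hstab x⟩) fun x y hxy =>
      Subgroup.mul_injective_of_disjoint hdisj (congrArg Subtype.val hxy)

theorem card_eq_of_action_on_neighbors [MulAction.IsPretransitive G (Fin 55)]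
    (hN : ActsByAutomorphisms G neighbors)
    (hloc : ∃ i, ∀ j ∈ neighbors i, ∀ k ∈ neighbors i, ∃ g : G, g • i = i ∧ g • j = k)
    (hfix : ∃ i, ∃ g : G, g ≠ 1 ∧ g • i = i ∧ ∀ j ∈ neighbors i, g • j = j) :
    Nat.card G = 1320 := by
  have : Finite G := Finite.of_injective _ (MulAction.toPerm_injective (α := G) (β := Fin 55))
  have hstab : Nat.card (MulAction.stabilizer G ((0, 10) : Fin 55 × Fin 55)) = 4 :=
    (card_stabilizer_arc_le hN).antisymm (le_card_stabilizer_arc hN hfix)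
  have horbit : Nat.card (MulAction.orbit G ((0, 10) : Fin 55 × Fin 55)) = 330 := by
    rw [orbit_eq_arcs hN hloc (by decide +kernel), Nat.card_coe_set_eq, card_arcs_neighbors]
  have := Nat.card_congr (MulAction.orbitProdStabilizerEquivGroup G ((0, 10) : Fin 55 × Fin 55))
  rw [Nat.card_prod, hstab, horbit] at this
  exact this.symm

end CardOfAction

section ListEval

variable {S T : Type*} [CommRing S] [CommRing T]

/-- The value at `x` of the univariate polynomial with coefficients `l`, constant term first. -/
def listEval : List ℤ → S → S
  | [], _ => 0
  | c :: l, x => c + x * listEval l x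

/-- The value at `(x, y)` of the symmetric bivariate polynomial whose `k`-th row `A[k]` lists the
coefficients of `(x * y) ^ k`, `x ^ (k + 1) * y ^ k`, `x ^ (k + 2) * y ^ k`, .... -/
def symmEval : List (List ℤ) → S → S → S
  | [], _, _ => 0
  | l :: A, x, y => listEval l x + y * listEval l.tail y + x * y * symmEval A x y

/-- A strict upper bound for the degree in each variable of the polynomial `symmEval A`. -/
def symmWidth : List (List ℤ) → ℕ
  | [] => 0
  | l :: A => max l.length (symmWidth A + 1)

theorem map_listEval (φ : S →+* T) (l : List ℤ) (x : S) :
    φ (listEval l x) = listEval l (φ x) := by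
  induction l with
  | nil => exact map_zero φ
  | cons c l ih => simp only [listEval, map_add, map_mul, map_intCast, ih]

theorem map_symmEval (φ : S →+* T) (A : List (List ℤ)) (x y : S) :
    φ (symmEval A x y) = symmEval A (φ x) (φ y) := by
  induction A with
  | nil => exact map_zero φ
  | cons l A ih => simp only [symmEval, map_add, map_mul, map_listEval, ih]

theorem symmEval_comm (A : List (List ℤ)) (x y : S) : symmEval A x y = symmEval A y x := by
  induction A with
  | nil => rfl
  | cons l A ih =>
    cases l with
    | nil => simp only [symmEval, ih, listEval, List.tail_nil]; ring
    | cons c l => simp only [symmEval, ih, listEval, List.tail_cons]; ring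

theorem coeff_listEval (l : List ℤ) (n : ℕ) :
    (listEval l (X : S[X])).coeff n = (l.getD n 0 : ℤ) := by
  induction l generalizing n with
  | nil => simp [listEval]
  | cons c l ih =>
    cases n with
    | zero =>
      rw [listEval, coeff_add, ← C_eq_intCast, coeff_C_zero, coeff_X_mul_zero, add_zero,
        List.getD_cons_zero]
    | succ n =>
      rw [listEval, coeff_add, coeff_X_mul, ih, ← C_eq_intCast, coeff_C_succ, zero_add,
        List.getD_cons_succ]

theorem degree_symmEval_lt (A : List (List ℤ)) (y : S) :
    (symmEval A X (C y)).degree < symmWidth A := by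
  induction A with
  | nil => exact degree_zero.trans_lt (WithBot.bot_lt_coe 0)
  | cons l A ih =>
    simp only [degree_lt_iff_coeff_zero, symmWidth, max_le_iff] at ih ⊢
    rintro (_ | n) ⟨hl, hA⟩
    · exact absurd hA (Nat.not_succ_le_zero _)
    · have hrow : (listEval l (X : S[X])).coeff (n + 1) = 0 :=
        (coeff_listEval l _).trans (by rw [List.getD_eq_default _ _ hl, Int.cast_zero])
      rw [symmEval, coeff_add, coeff_add, hrow, ← map_listEval, ← C_mul, coeff_C_succ, mul_assoc,
        coeff_X_mul, coeff_C_mul, ih n (Nat.le_of_succ_le_succ hA), mul_zero, add_zero, add_zero]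

theorem natDegree_symmEval_le (A : List (List ℤ)) (y : S) :
    (symmEval A X (C y)).natDegree ≤ symmWidth A - 1 :=
  natDegree_le_iff_coeff_eq_zero.2 fun n hn =>
    (degree_lt_iff_coeff_zero _ _).1 (degree_symmEval_lt A y) n (by lia)

end ListEval

section Orbitals

variable {S T : Type*} [CommRing S] [CommRing T]

/-- The polynomial `q` of the theorem over an arbitrary commutative ring. -/
def qEval (x : S) : S :=
  11 ^ 4 * (2 * x + 1) * (176 * x ^ 3 + 1056 * x ^ 2 + 330 * x + 31) ^ 4 * (264 * x ^ 3 +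
    154 * x ^ 2 + 22 * x + 1) ^ 4 * (352 * x ^ 3 + 264 * x ^ 2 + 99 * x + 14) ^ 4 * (704 * x ^
    3 + 132 * x ^ 2 + 1) ^ 4 * (1408 * x ^ 3 + 693 * x ^ 2 + 132 * x + 8) ^ 2

/-- The polynomial `r` of the theorem over an arbitrary commutative ring. -/
def rEval (x : S) : S :=
  -16 * (22 * x ^ 2 - 11 * x - 2) ^ 6 * (44 * x ^ 2 + 22 * x + 3) ^ 6 * (88 * x ^ 2 + 55 * x
    + 1) ^ 6 * (176 * x ^ 2 + 44 * x + 5) ^ 6 * (704 * x ^ 2 + 242 * x + 17) ^ 3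

/-- The factor of `(r(x) q(y) - q(x) r(y)) / (x - y)` belonging to the suborbit of length `6` of
`PGL(2, 11)` on `55` points, in the encoding of `symmEval`; found by factoring this polynomial
over `ℚ`. -/
def adjCoeffs : List (List ℤ) :=
  [[-13400, -224070, -1494372, -3877544, 4872912, 48531648, 76092544],
   [-2270367, 4560534, 168291156, 1028408040, 2877016032, 3249599232],
   [478926954, 5037712548, 23735164464, 56225784384, 55712380416],
   [48544012264, 223828158048, 516114863616, 488646771712],
   [1048363747200, 2449073392128, 2307147988992],
   [5843341633536, 5572849041408],
   [5403974828032]]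

/-- The first of the four factors belonging to the suborbits of length `12`; see `adjCoeffs`. -/
def cofactorCoeffs₁ : List (List ℤ) :=
  [[-13838400, -670259370, -14310123256, -177819641384, -1425088748160, -7680538903488,
    -28041348504576, -67720576720896, -100238403403776, -69920466468864, 18698981081088,
    65093333155840, 31441308090368],
   [-34422534509, -776766076108, -10183282700844, -86227062764304, -494499142268736,
    -1952655959434752, -5273274181908480, -9414645326118912, -10233112388370432,
    -5350272828178432, 174892276252672, 1037563166982144],
   [-18449700713158, -254012030540796, -2259237702696216, -13655645624412528, -57259643478584448,
    -166378222501860864, -327106107856957440, -411048844460638208, -290365753695666176,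
    -76421661024321536, 12191367212040192],
   [-3663402078599560, -34116871923440064, -216287690653504800, -954799904538600384,
    -2938236918771762432, -6172655037675743232, -8413116994119270400, -6667725667733864448,
    -2288965670890635264, 47554978486681600],
   [-332382646885608000, -2206275568625741184, -10218920787657648000, -33092538080096715264,
    -73430294863688902656, -106229662723576922112, -90109861376292814848, -34018838387031539712,
    -139098312073543680],
   [-15335780067296853120, -74459410086351654144, -253085174313704054784, -590070303576395440128,
    -897460850939838873600, -800107120145960140800, -316942581577851863040, -1247604860598091776],
   [-378924045415272377856, -1349695224538752301056, -3294872346382577123328,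
    -5236589879914428727296, -4859405419307654578176, -1987019900672683278336, 896470788197056512],
   [-5029086028083301527552, -12808689236830500913152, -21152589249007783378944,
    -20275202474067795640320, -8494020749693785473024, 13723653466579009536],
   [-33877725018949631508480, -57725777417657208668160, -56597388497881193250816,
    -24033561619641170657280, -16830895760898785280],
   [-100478103299464947302400, -99180031053712019423232, -41638366602591031263232,
    -63295676365773209600],
   [-95920120981581782319104, -37783918848773302779904, 178493807351480451072],
   [-12971024718446989410304, -167100585605641273344],
   [55700195201880424448]]

/-- The second of the four factors belonging to the suborbits of length `12`; see `adjCoeffs`. -/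
def cofactorCoeffs₂ : List (List ℤ) :=
  [[33345, 3705768, 183518654, 5176261200, 92719260480, 1121796405312, 9495866300448,
    57156534412032, 244423705008384, 727805954574336, 1437551276519424, 1696090081067008,
    906532129603584],
   [348930131, 15083790051, 384604305096, 6381914592768, 72579217675008, 581927425025232,
    3327964194278592, 13524777215279616, 38211568842095616, 71418605512781824, 79456432347021312,
    39887413702557696],
   [577803729030, 13354156502412, 204797083668276, 2182243746190728, 16532174321739648,
    89711289548889888, 346330177985212608, 928404844068359680, 1641713467276422144,
    1721288210717442048, 811044078618673152],
   [282706862154948, 4019640628514148, 40127810433748488, 286969336749765648, 1476660516701233248,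
    5415194963573112960, 13780582682953549056, 23069936189596268544, 22799127517744005120,
    10075265238942351360],
   [53311057381933560, 499754354319133056, 3375507373941529728, 16471885793954260032,
    57399966538696070784, 138785728850070922752, 220243258616475426816, 205410528726103523328,
    85152241696867614720],
   [4415119211618121600, 28211915386995614208, 130654741209556557312, 432935580991470670080,
    995687878003822248960, 1500521008404823646208, 1323776917217988575232, 515766911285556412416],
   [170924258477539835136, 752230404916556037120, 2372667789248138967552, 5197806657876149053440,
    7455717679605310832640, 6242980746165458042880, 2295581173643313414144],
   [3150941690979075451392, 9473833898395147404288, 19805230221249660887040,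
    27117153428089642942464, 21650817481356906332160, 7564581365521494048768],
   [27197300987202989187072, 54380832595451787313152, 71333487515420973072384,
    54636019223183567093760, 18317193325015078010880],
   [104296172501336222466048, 131691673097820351234048, 97527288113139965493248,
    31787088670891305861120],
   [161069353238659535470592, 116526964371310057095168, 37529272430794251436032],
   [83462470051863126343680, 27070294868113886281728],
   [9023431622704628760576]]

/-- The third of the four factors belonging to the suborbits of length `12`; see `adjCoeffs`. -/
def cofactorCoeffs₃ : List (List ℤ) :=
  [[-28095424, -1752572976, -43185676512, -601109079164, -5335348015008, -31294892945448,
    -118730713298208, -259487591904288, -183959091866880, 345833480751616, 222861788160000,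
    -1105966578647040, 30704402432],
   [-89415361728, -2008787524524, -27428545662276, -253468327883364, -1643608874461356,
    -7467915813125328, -22765712917614480, -41561016816920832, -33973432562023680,
    -4751404238186496, -23385855789711360, 10132452802560],
   [-43791690486852, -605515450774839, -5814167283092718, -40237522352844300, -202835908176055704,
    -725783393596295232, -1714524647460945408, -2333800273260850944, -1473258316940061696,
    -649665506182606848, 1409424184836096],
   [-8411454267976210, -79220372238173232, -535738541739390792, -2718482499999037200,
    -10311958090843827264, -27272689948355322240, -43929522920677073152, -34743489304615719936,
    -12503374683372503040, 106627178325606400],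
   [-681972148840679136, -4036040641548170640, -18412900595082873792, -69759029784445670592,
    -204055286108964098688, -379242601089564833280, -344393382971344582656,
    -120004110864745316352, 4708444426595205120],
   [-18026123004991271808, -54873493120707345216, -176827254655924211328, -665432839924659189504,
    -1643684842673765185536, -1757404795654465892352, -536937127895640637440,
    120475522431870566400],
   [19252517948242571520, 479365413462430336512, 370480173253864210944, -2545078378443412297728,
    -4013100907003066982400, 132452731388032450560, 1656816435012650926080],
   [4242696812619530107392, 9275920163045200051200, 4298783077700609642496,
    -2044496551860533624832, 9339655593757864624128, 10601845974004609843200],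
   [22909449170101082738688, 10315159640541792976896, -9633652120571249295360,
    25916858611832397496320, 36462193639553268449280],
   [-37439519785959558479872, -89587333492149561851904, 5430688114415260139520,
    72663436467907644620800],
   [-177145412544987150680064, -50036537640468766261248, 84522514391798913171456],
   [-11040031871718163218432, 53472187393805207470080],
   [14259249971681388658688]]

/-- The fourth of the four factors belonging to the suborbits of length `12`; see `adjCoeffs`. -/
def cofactorCoeffs₄ : List (List ℤ) :=
  [[14448, 1163888, 65085020, 1250843264, 11971652880, 61840552224, 153326710416, 36900942144,
    -518573529408, 76244450304, 4062283895296, 7108428980224, 3748096000000],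
   [18034544, 1362240572, 32700189984, 353953119432, 2006078582640, 6313299908784, 14964188138592,
    58226929297152, 230044693681792, 500700637203712, 514365336905728, 197899468800000],
   [40716404531, 877687981038, 10345280962170, 73322436073260, 365828178965964, 1521936584882736,
    5356238857409616, 13559658167509696, 20769350961289216, 16366725736413184, 5145386188800000],
   [17770484097619, 217145432092149, 1718444917790370, 9857820736187292, 43536616424439336,
    142543194360646464, 313186498963457152, 411063440888280576, 281928362976387072,
    85914756055040000],
   [2785695122923812, 23590245491476488, 142838749480526352, 630339116335858512,
    1941915144475190016, 3864539922761506560, 4518021576473281536, 2852166680701476864,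
    1019831374577664000],
   [209889420301881936, 1290819072049290432, 5516812620296116128, 15739851493098919296,
    27937243275859230720, 28333991352175060992, 16992516742373179392, 9033365382160711680],
   [7744552366326152256, 30883132340656149312, 78206671675317664512, 114480681162914863104,
    85335354348901257216, 51412927665267277824, 61113021740680740864],
   [109013222678289152256, 220668350915701320192, 182401782446687840256, -65405944964414275584,
    -320238197315469312, 317974461452057051136],
   [221612120729519376384, -508306131673532915712, -1525199532062759190528,
    -532925769212542058496, 1263611866356708802560],
   [-3069468558369318961152, -5259860141731587555328, -1321606529826848505856,
    3747104040853774008320],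
   [-6906256881570291908608, 970006240305474437120, 7899300410448496558080],
   [8729739684367441068032, 10694437478761041494016],
   [7129624985840694329344]]

/-- The sextic symmetric correspondence: distinct roots `x` and `y` of a member of the pencil are
joined in the graph on which the Galois group acts when `adj x y = 0`. -/
def adj (x y : S) : S := symmEval adjCoeffs x y

/-- The product of the four symmetric correspondences of degree `12`, whose zeros are the pairs of
distinct roots of a member of the pencil that are not joined by `adj`. -/
def cofactor (x y : S) : S :=
  symmEval cofactorCoeffs₁ x y * symmEval cofactorCoeffs₂ x y * symmEval cofactorCoeffs₃ x y *
    symmEval cofactorCoeffs₄ x y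

/-- The difference of the two sides of the factorization `rEval_mul_qEval_sub`, named so that it
can be interpolated to zero. -/
def discrepancy (x y : S) : S :=
  rEval x * qEval y - qEval x * rEval y - 234256 * (x - y) * adj x y * cofactor x y

theorem map_qEval (φ : S →+* T) (x : S) : φ (qEval x) = qEval (φ x) := by
  simp only [qEval, map_mul, map_add, map_pow, map_ofNat, map_one]

theorem map_rEval (φ : S →+* T) (x : S) : φ (rEval x) = rEval (φ x) := by
  simp only [rEval, map_mul, map_add, map_sub, map_neg, map_pow, map_ofNat, map_one]

theorem map_adj (φ : S →+* T) (x y : S) : φ (adj x y) = adj (φ x) (φ y) :=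
  map_symmEval φ _ x y

theorem map_cofactor (φ : S →+* T) (x y : S) : φ (cofactor x y) = cofactor (φ x) (φ y) := by
  simp only [cofactor, map_mul, map_symmEval]

theorem map_discrepancy (φ : S →+* T) (x y : S) :
    φ (discrepancy x y) = discrepancy (φ x) (φ y) := by
  simp only [discrepancy, map_sub, map_mul, map_qEval, map_rEval, map_adj, map_cofactor,
    map_ofNat]

theorem adj_comm (x y : S) : adj x y = adj y x :=
  symmEval_comm _ x y

theorem cofactor_comm (x y : S) : cofactor x y = cofactor y x := by
  simp only [cofactor, symmEval_comm _ x y]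

theorem discrepancy_swap (x y : S) : discrepancy x y = -discrepancy y x := by
  simp only [discrepancy, adj_comm x y, cofactor_comm x y]
  ring

theorem natDegree_qEval_le : (qEval (X : S[X])).natDegree ≤ 55 := by
  unfold qEval
  compute_degree

theorem natDegree_rEval_le : (rEval (X : S[X])).natDegree ≤ 54 := by
  unfold rEval
  compute_degree

theorem natDegree_adj_le (y : S) : (adj X (C y)).natDegree ≤ 6 :=
  natDegree_symmEval_le _ y

theorem natDegree_cofactor_le (y : S) : (cofactor X (C y)).natDegree ≤ 48 :=
  natDegree_mul_le_of_le (natDegree_mul_le_of_le (natDegree_mul_le_of_le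
    (natDegree_symmEval_le _ y) (natDegree_symmEval_le _ y)) (natDegree_symmEval_le _ y))
    (natDegree_symmEval_le _ y)

theorem natDegree_discrepancy_le (y : S) : (discrepancy X (C y)).natDegree ≤ 55 := by
  have hlin : (234256 * (X - C y) : S[X]).natDegree ≤ 1 := by compute_degree
  refine natDegree_sub_le_of_le (m := max 55 55) (natDegree_sub_le_of_le ?_ ?_)
    (natDegree_mul_le_of_le (natDegree_mul_le_of_le hlin (natDegree_adj_le y))
      (natDegree_cofactor_le y))
  · rw [← map_qEval]
    exact natDegree_mul_C_le _ _ |>.trans (natDegree_rEval_le.trans (by norm_num))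
  · rw [← map_rEval]
    exact natDegree_mul_C_le _ _ |>.trans natDegree_qEval_le

theorem discrepancy_natCast_natCast (n : ℕ) (hn : n < 56) (m : ℕ) (hm : m < n) :
    discrepancy (m : ℤ) (n : ℤ) = 0 := by
  revert n m
  decide +kernel

theorem discrepancy_eq_zero_of_forall_natCast [IsDomain S] [CharZero S] {y : S}
    (h : ∀ n : ℕ, n < 56 → discrepancy (n : S) y = 0) (x : S) : discrepancy x y = 0 := by
  have eval_eq (z : S) : (discrepancy X (C y)).eval z = discrepancy z y :=
    (map_discrepancy (evalRingHom z) X (C y)).trans (by simp)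
  have hzero : discrepancy X (C y) = 0 :=
    eq_zero_of_natDegree_lt_card_of_eval_eq_zero (f := fun n : Fin 56 => (n : S)) _
      (Nat.cast_injective.comp Fin.val_injective)
      (fun n => (eval_eq n).trans (h n n.2))
      ((natDegree_discrepancy_le y).trans_lt (by simp))
  rw [← eval_eq, hzero, eval_zero]

theorem discrepancy_eq_zero_of_charZero [IsDomain S] [CharZero S] (x y : S) :
    discrepancy x y = 0 := by
  have hgrid (m : ℕ) (hm : m < 56) (n : ℕ) (hn : n < 56) : discrepancy (m : ℤ) (n : ℤ) = 0 := by
    rcases lt_trichotomy m n with h | rfl | h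
    · exact discrepancy_natCast_natCast n hn m h
    · exact self_eq_neg.1 (discrepancy_swap _ _)
    · rw [discrepancy_swap, discrepancy_natCast_natCast m hm n h, neg_zero]
  refine discrepancy_eq_zero_of_forall_natCast (fun m hm => ?_) x
  rw [discrepancy_swap, neg_eq_zero]
  refine discrepancy_eq_zero_of_forall_natCast (fun n hn => ?_) y
  simpa only [map_discrepancy, map_natCast, map_zero] using
    congrArg (Int.castRingHom S) (hgrid n hn m hm)

theorem discrepancy_eq_zero (x y : S) : discrepancy x y = 0 := by
  simpa [map_discrepancy] using congrArg (MvPolynomial.eval₂Hom (Int.castRingHom S) ![x, y])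
    (discrepancy_eq_zero_of_charZero (MvPolynomial.X 0) (MvPolynomial.X 1))

theorem rEval_mul_qEval_sub (x y : S) : rEval x * qEval y - qEval x * rEval y =
    234256 * (x - y) * adj x y * cofactor x y :=
  sub_eq_zero.1 (discrepancy_eq_zero x y)

end Orbitals

section Pencil

variable {S T : Type*} [CommRing S] [CommRing T]

/-- The polynomial `p - t * q` of the theorem, with `t` in an arbitrary commutative ring. -/
noncomputable def pencil (t : S) : S[X] :=
  qEval X + rEval X - C t * qEval X

theorem map_pencil (φ : S →+* T) (t : S) : (pencil t).map φ = pencil (φ t) := by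
  simp only [pencil, Polynomial.map_sub, Polynomial.map_add, Polynomial.map_mul, map_C,
    ← coe_mapRingHom, map_qEval, map_rEval]
  simp only [coe_mapRingHom, map_X]

theorem eval_pencil (t x : S) : (pencil t).eval x = qEval x + rEval x - t * qEval x := by
  simp only [pencil, eval_sub, eval_add, eval_mul, eval_C, ← coe_evalRingHom, map_qEval, map_rEval]
  simp only [coe_evalRingHom, eval_X]

theorem isRoot_pencil_map {t x : S} (hx : (pencil t).IsRoot x) (φ : S →+* T) :
    (pencil (φ t)).IsRoot (φ x) := by
  rw [← map_pencil]
  exact hx.map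

theorem natDegree_pencil_le (t : S) : (pencil t).natDegree ≤ 55 := by
  unfold pencil qEval rEval
  compute_degree

theorem coeff_qEval : (qEval (X : S[X])).coeff 55 = 2 ^ 87 * 3 ^ 4 * 11 ^ 22 := by
  unfold qEval
  compute_degree
  all_goals norm_num

theorem coeff_pencil (t : S) : (pencil t).coeff 55 = (1 - t) * (2 ^ 87 * 3 ^ 4 * 11 ^ 22) := by
  rw [pencil, coeff_sub, coeff_add, coeff_C_mul, coeff_qEval,
    coeff_eq_zero_of_natDegree_lt (natDegree_rEval_le.trans_lt (by norm_num))]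
  ring

theorem pencil_ne_zero [IsDomain S] [CharZero S] {t : S} (ht : t ≠ 1) : pencil t ≠ 0 := by
  have hcoeff : (pencil t).coeff 55 ≠ 0 := by
    simp [coeff_pencil, sub_eq_zero, ht.symm]
  exact fun h => hcoeff (by rw [h, coeff_zero])

theorem C_qEval_mul_pencil {t x : S} (hx : (pencil t).IsRoot x) :
    C (qEval x) * pencil t = 234256 * (X - C x) * adj X (C x) * cofactor X (C x) := by
  rw [IsRoot, eval_pencil] at hx
  rw [← rEval_mul_qEval_sub, pencil, ← map_qEval, ← map_rEval]
  have hr : (C (rEval x) : S[X]) = (C t - 1) * C (qEval x) := by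
    rw [← C_1, ← C_sub, ← C_mul]
    exact congrArg C (by linear_combination hx)
  rw [hr]
  ring

theorem adj_mul_cofactor_eq_zero [IsDomain S] [CharZero S] {t x y : S} (hx : (pencil t).IsRoot x)
    (hy : (pencil t).IsRoot y) (hxy : x ≠ y) : adj x y * cofactor x y = 0 := by
  have h := congrArg (evalRingHom y) (C_qEval_mul_pencil hx)
  simp only [map_mul, map_sub, map_adj, map_cofactor, map_ofNat] at h
  simp only [coe_evalRingHom, eval_X, eval_C, hy.eq_zero, mul_zero] at h
  rw [adj_comm, cofactor_comm]
  simpa [mul_assoc, sub_eq_zero, hxy.symm, eq_comm] using h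

theorem qEval_mul_derivative_pencil {t x : S} (hx : (pencil t).IsRoot x) :
    qEval x * (pencil t).derivative.eval x = 234256 * adj x x * cofactor x x := by
  have hfactor : C (qEval x) * pencil t =
      (X - C x) * (234256 * adj X (C x) * cofactor X (C x)) := by
    rw [C_qEval_mul_pencil hx]
    ring
  have h := congrArg (fun f => evalRingHom x f.derivative) hfactor
  simp only [derivative_mul, derivative_C, map_add, map_mul, map_sub, map_adj,
    map_cofactor, map_ofNat, map_zero] at h
  simpa using h

end Pencil

section Irreducibility

theorem irreducible_map_sub_C_mul_map {k : Type*} [Field k] {a b : k[X]} (hab : IsCoprime a b)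
    (hdeg : (a.map RatFunc.C - C RatFunc.X * b.map RatFunc.C).natDegree ≠ 0) :
    Irreducible (a.map RatFunc.C - C RatFunc.X * b.map RatFunc.C) := by
  rcases eq_or_ne b 0 with rfl | hb
  · obtain ⟨c, -, rfl⟩ := Polynomial.isUnit_iff.1 (isCoprime_zero_right.1 hab)
    simp at hdeg
  let linear : k[X][X] := C (-b) * X + C a
  have hlinear : Irreducible linear := by
    refine irreducible_of_degree_eq_one_of_isRelPrime_coeff (degree_linear (neg_ne_zero.2 hb)) ?_
    simpa [linear] using hab.neg_right.isRelPrime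
  have hswap : Irreducible (Bivariate.swap linear) :=
    (MulEquiv.irreducible_iff (Bivariate.swap (R := k))).2 hlinear
  have hC : (algebraMap k[X] (RatFunc k)).comp C = RatFunc.C := by
    ext
    simp
  have hmap : (Bivariate.swap linear).map (algebraMap k[X] (RatFunc k)) =
      a.map RatFunc.C - C RatFunc.X * b.map RatFunc.C := by
    simp only [linear, map_add, map_mul, map_neg, Bivariate.swap_C, Bivariate.swap_Y,
      Polynomial.map_add, Polynomial.map_mul, Polynomial.map_neg, Polynomial.map_map, map_C,
      RatFunc.algebraMap_X, hC]
    ring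
  rw [← hmap] at hdeg ⊢
  exact ((hswap.isPrimitive (hdeg ∘ fun h => Nat.eq_zero_of_le_zero
    (natDegree_map_le.trans h.le))).irreducible_iff_irreducible_map_fraction_map).1 hswap

theorem irreducible_map_C_units_mul {R S : Type*} [CommRing R] [CommRing S] (φ : R →+* S) (u : Rˣ)
    {f : R[X]} : Irreducible ((C (u : R) * f).map φ) ↔ Irreducible (f.map φ) := by
  rw [Polynomial.map_mul, map_C]
  exact irreducible_isUnit_mul (isUnit_C.2 (u.isUnit.map φ))

variable {R : Type*} [CommRing R] [IsDomain R] [IsIntegrallyClosed R]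
  {k : Type*} [Field k] (φ : R →+* k) [IsLocalHom φ]

theorem irreducible_map_algebraMap_of_irreducible_map (K : Type*) [Field K] [Algebra R K]
    [IsFractionRing R K] {f : R[X]} (hdeg : f.natDegree ≤ (f.map φ).natDegree)
    (hf : Irreducible (f.map φ)) : Irreducible (f.map (algebraMap R K)) := by
  have hlead : IsUnit f.leadingCoeff := by
    refine isUnit_of_map_unit φ _ (IsUnit.mk0 _ ?_)
    rw [← coeff_natDegree, ← coeff_map, hdeg.antisymm natDegree_map_le]
    exact leadingCoeff_ne_zero.2 hf.ne_zero
  obtain ⟨u, hu⟩ := hlead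
  have hmonic : (C (↑u⁻¹ : R) * f).Monic := by
    rw [Monic, leadingCoeff_mul, leadingCoeff_C, ← hu, Units.inv_mul]
  have hmonic_irr : Irreducible (C (↑u⁻¹ : R) * f) :=
    hmonic.irreducible_of_irreducible_map φ _ ((irreducible_map_C_units_mul φ _).2 hf)
  exact (irreducible_map_C_units_mul _ _).1
    (hmonic.irreducible_iff_irreducible_map_fraction_map.1 hmonic_irr)

end Irreducibility

section Roots

variable {R : Type*} [CommRing R] [IsDomain R]

theorem mem_range_of_isRoot {f : R[X]} (hf : f ≠ 0) {n : ℕ} (hn : f.natDegree ≤ n)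
    {ρ : Fin n → R} (hinj : ρ.Injective) (hρ : ∀ i, f.IsRoot (ρ i)) {x : R} (hx : f.IsRoot x) :
    x ∈ Set.range ρ := by
  by_contra hxρ
  refine hf (eq_zero_of_natDegree_lt_card_of_eval_eq_zero f
    (Fin.cons_injective_iff.2 ⟨hxρ, hinj⟩) (Fin.cases hx hρ) ?_)
  simpa [Nat.lt_succ_iff] using hn

theorem mem_range_algebraMap_of_isRoot [UniqueFactorizationMonoid R] {K : Type*} [Field K]
    [Algebra R K] [IsFractionRing R K] {f : R[X]} (hf : IsUnit f.leadingCoeff) {x : K}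
    (hx : (f.map (algebraMap R K)).IsRoot x) : x ∈ (algebraMap R K).range := by
  have hden : IsUnit (IsFractionRing.den R x : R) :=
    isUnit_of_dvd_unit (den_dvd_of_is_root (by rwa [IsRoot, eval_map_algebraMap] at hx)) hf
  exact IsFractionRing.isInteger_of_isUnit_den hden

end Roots

section Padic

variable {l : ℕ} [Fact l.Prime]

theorem toZMod_eq_zero_iff_norm_lt_one {x : ℤ_[l]} : PadicInt.toZMod x = 0 ↔ ‖x‖ < 1 := by
  rw [← RingHom.mem_ker, PadicInt.ker_toZMod, IsLocalRing.mem_maximalIdeal, PadicInt.mem_nonunits]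

instance isLocalHom_toZMod : IsLocalHom (PadicInt.toZMod : ℤ_[l] →+* ZMod l) :=
  IsLocalHom.of_surjective _ (ZMod.ringHom_surjective _)

theorem algebraMap_padicInt_injective :
    Function.Injective (algebraMap ℤ_[l] (AlgebraicClosure ℚ_[l])) := by
  rw [IsScalarTower.algebraMap_eq ℤ_[l] ℚ_[l]]
  exact (algebraMap ℚ_[l] _).injective.comp (IsFractionRing.injective ℤ_[l] ℚ_[l])

theorem algebraMap_padicInt_mem_range (z : ℤ_[l]) :
    algebraMap ℤ_[l] (AlgebraicClosure ℚ_[l]) z ∈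
      (algebraMap ℚ_[l] (AlgebraicClosure ℚ_[l])).range :=
  ⟨z, (IsScalarTower.algebraMap_apply ℤ_[l] ℚ_[l] _ z).symm⟩

theorem exists_isRoot_toZMod_eq {f : ℤ_[l][X]} {c : ZMod l}
    (hc : (f.map PadicInt.toZMod).IsRoot c)
    (hsimple : (f.map PadicInt.toZMod).derivative.eval c ≠ 0) :
    ∃ z, f.IsRoot z ∧ PadicInt.toZMod z = c := by
  obtain ⟨a, rfl⟩ := ZMod.ringHom_surjective PadicInt.toZMod c
  rw [IsRoot, eval_map_apply, toZMod_eq_zero_iff_norm_lt_one] at hc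
  rw [derivative_map, eval_map_apply, Ne, toZMod_eq_zero_iff_norm_lt_one, not_lt] at hsimple
  have hderiv : ‖aeval a f.derivative‖ = 1 := (PadicInt.norm_le_one _).antisymm hsimple
  obtain ⟨z, hz, hza, -⟩ := hensels_lemma (F := f) (a := a) (by rwa [hderiv, one_pow])
  rw [hderiv, ← toZMod_eq_zero_iff_norm_lt_one, map_sub, sub_eq_zero] at hza
  exact ⟨z, hz, hza⟩

theorem exists_transcendental_toZMod_eq (c : ZMod l) :
    ∃ τ : ℤ_[l], PadicInt.toZMod τ = c ∧ Transcendental ℚ (τ : ℚ_[l]) := by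
  obtain ⟨a, rfl⟩ := ZMod.ringHom_surjective (PadicInt.toZMod (p := l)) c
  obtain ⟨x, hx, hxa⟩ := ((Algebraic.countable ℚ ℚ_[l]).dense_compl ℚ_[l]).exists_mem_open
    (Metric.isOpen_ball (x := (a : ℚ_[l])) (ε := 1)) ⟨_, Metric.mem_ball_self one_pos⟩
  rw [Metric.mem_ball, dist_eq_norm] at hxa
  have hnorm : ‖x‖ ≤ 1 := by
    have h := Padic.nonarchimedean (x - (a : ℚ_[l])) a
    rw [sub_add_cancel] at h
    exact h.trans (max_le hxa.le a.2)
  let τ : ℤ_[l] := ⟨x, hnorm⟩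
  refine ⟨τ, ?_, hx⟩
  rwa [← sub_eq_zero, ← map_sub, toZMod_eq_zero_iff_norm_lt_one, PadicInt.norm_def]

end Padic

section PadicPlace

/-- An `l`-adic place of the splitting field of `f` over `ℚ(t)`: an embedding into an algebraic
closure of `ℚ_l` sending `t` to an `l`-adic integer `τ`. The field `exists_lift` records that
conjugation over `ℚ_l` restricts to the splitting field, i.e. the map from the decomposition group
to the Galois group of `f`. -/
structure PadicPlace (f : (RatFunc ℚ)[X]) (l : ℕ) [Fact l.Prime] where
  τ : ℤ_[l]
  embed : f.SplittingField →+* AlgebraicClosure ℚ_[l]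
  embed_algebraMap_X : embed (algebraMap (RatFunc ℚ) f.SplittingField RatFunc.X) =
    algebraMap ℤ_[l] (AlgebraicClosure ℚ_[l]) τ
  exists_lift (θ : AlgebraicClosure ℚ_[l] ≃ₐ[ℚ_[l]] AlgebraicClosure ℚ_[l]) :
    ∃ σ : f.Gal, ∀ x, embed (σ x) = θ (embed x)

variable {f : (RatFunc ℚ)[X]} {l : ℕ} [Fact l.Prime]

theorem exists_padicPlace (f : (RatFunc ℚ)[X]) (c : ZMod l) :
    ∃ P : PadicPlace f l, PadicInt.toZMod P.τ = c := by
  obtain ⟨τ, hτ, htrans⟩ := exists_transcendental_toZMod_eq c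
  let specialize : RatFunc ℚ →+* ℚ_[l] := RatFunc.liftRingHom
    (aeval (τ : ℚ_[l]) : ℚ[X] →ₐ[ℚ] ℚ_[l]).toRingHom
    (nonZeroDivisors_le_comap_nonZeroDivisors_of_injective _
      (transcendental_iff_injective.1 htrans))
  have hspecialize : specialize RatFunc.X = τ := by
    rw [← RatFunc.algebraMap_X]
    exact (RatFunc.liftRingHom_algebraMap _ _ X).trans (by simp)
  let _ : Algebra (RatFunc ℚ) ℚ_[l] := specialize.toAlgebra
  let ψ : f.SplittingField →ₐ[RatFunc ℚ] AlgebraicClosure ℚ_[l] :=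
    SplittingField.lift f (IsAlgClosed.splits _)
  let _ : Algebra f.SplittingField (AlgebraicClosure ℚ_[l]) := ψ.toRingHom.toAlgebra
  have _ : IsScalarTower (RatFunc ℚ) f.SplittingField (AlgebraicClosure ℚ_[l]) :=
    IsScalarTower.of_algebraMap_eq fun x => (ψ.commutes x).symm
  refine ⟨⟨τ, ψ, ?_, fun θ => ⟨(θ.restrictScalars (RatFunc ℚ)).restrictNormal f.SplittingField,
    (θ.restrictScalars (RatFunc ℚ)).restrictNormal_commutes f.SplittingField⟩⟩, hτ⟩
  rw [IsScalarTower.algebraMap_apply ℤ_[l] ℚ_[l], PadicInt.algebraMap_apply, ← hspecialize]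
  exact ψ.commutes RatFunc.X

namespace PadicPlace

variable (P : PadicPlace f l)

theorem exists_gal_apply_eq {g : ℚ_[l][X]} (hg : Irreducible g) {y y' : f.SplittingField}
    (hy : aeval (P.embed y) g = 0) (hy' : aeval (P.embed y') g = 0) :
    ∃ σ : f.Gal, σ y = y' ∧
      ∀ x, P.embed x ∈ (algebraMap ℚ_[l] (AlgebraicClosure ℚ_[l])).range → σ x = x := by
  have hconj : IsConjRoot ℚ_[l] (P.embed y') (P.embed y) :=
    (minpoly.eq_of_irreducible hg hy').symm.trans (minpoly.eq_of_irreducible hg hy)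
  obtain ⟨θ, hθ⟩ := isConjRoot_iff_exists_algEquiv.1 hconj
  obtain ⟨σ, hσ⟩ := P.exists_lift θ
  refine ⟨σ, P.embed.injective ((hσ y).trans hθ), ?_⟩
  rintro x ⟨a, ha⟩
  exact P.embed.injective (by rw [hσ, ← ha, AlgEquiv.commutes])

theorem exists_gal_apply_ne {y : f.SplittingField}
    (hy : P.embed y ∉ (algebraMap ℚ_[l] (AlgebraicClosure ℚ_[l])).range) :
    ∃ σ : f.Gal, σ y ≠ y ∧
      ∀ x, P.embed x ∈ (algebraMap ℚ_[l] (AlgebraicClosure ℚ_[l])).range → σ x = x := by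
  obtain ⟨θ, hθ⟩ : ∃ θ : AlgebraicClosure ℚ_[l] ≃ₐ[ℚ_[l]] AlgebraicClosure ℚ_[l],
      θ (P.embed y) ≠ P.embed y := by
    by_contra! h
    exact hy ((InfiniteGalois.mem_range_algebraMap_iff_fixed _).2 h)
  obtain ⟨σ, hσ⟩ := P.exists_lift θ
  refine ⟨σ, fun h => hθ ?_, ?_⟩
  · rw [← hσ, h]
  · rintro x ⟨a, ha⟩
    exact P.embed.injective (by rw [hσ, ← ha, AlgEquiv.commutes])

end PadicPlace

end PadicPlace

section Cubic

/-- Padding a factor of degree `d ≤ 3` by `X ^ (3 - d)` turns it into a cubic dividing `X ^ 2 * f`,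
so that only cubics have to be excluded. -/
theorem irreducible_of_no_monic_cubic_dvd {k : Type*} [Field k] {f : k[X]} (hf : f.natDegree = 6)
    (h : ∀ m : k[X], m.Monic → m.natDegree = 3 → ¬ m ∣ X ^ 2 * f) : Irreducible f := by
  have hf0 : f ≠ 0 := ne_zero_of_natDegree_gt (n := 0) (by lia)
  have hunit : ¬IsUnit f := not_isUnit_of_natDegree_pos f (by lia)
  refine (irreducible_iff_lt_natDegree_lt hf0 hunit).2 fun g hg hgdeg hgf => ?_
  rw [hf, Finset.mem_Ioc] at hgdeg
  refine h (X ^ (3 - g.natDegree) * g) ((monic_X_pow _).mul hg) ?_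
    (mul_dvd_mul (pow_dvd_pow X (by lia)) hgf)
  rw [(monic_X_pow _).natDegree_mul hg, natDegree_X_pow]
  lia

variable {S : Type*} [CommRing S]

/-- The coefficients, constant term first, of the remainder of the polynomial with coefficients `l`
modulo the cubic `X ^ 3 - (c + b * X + a * X ^ 2)`. -/
def cubicRem (c b a : S) : List ℤ → S × S × S
  | [] => (0, 0, 0)
  | d :: l =>
    match cubicRem c b a l with
    | (r₀, r₁, r₂) => (d + c * r₂, r₀ + b * r₂, r₁ + a * r₂)

theorem cubic_dvd_listEval_sub_cubicRem (c b a : S) (l : List ℤ) :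
    (X ^ 3 - (C c + C b * X + C a * X ^ 2)) ∣ listEval l (X : S[X]) -
      (C (cubicRem c b a l).1 + C (cubicRem c b a l).2.1 * X +
        C (cubicRem c b a l).2.2 * X ^ 2) := by
  induction l with
  | nil => simp [listEval, cubicRem]
  | cons d l ih =>
    convert (ih.mul_left X).add (Dvd.intro_left (C (cubicRem c b a l).2.2) rfl) using 1
    simp only [listEval, cubicRem, C_add, C_mul, map_intCast]
    ring

theorem cubicRem_eq_zero_of_dvd [Nontrivial S] {c b a : S} {l : List ℤ}
    (h : (X ^ 3 - (C c + C b * X + C a * X ^ 2)) ∣ listEval l (X : S[X])) :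
    cubicRem c b a l = (0, 0, 0) := by
  have hdegree (u v w : S) : (C u + C v * X + C w * X ^ 2).degree < ((3 : ℕ) : WithBot ℕ) :=
    lt_of_le_of_lt (b := 2) (by compute_degree) (by norm_num)
  have hmonic : (X ^ 3 - (C c + C b * X + C a * X ^ 2)).Monic := monic_X_pow_sub (hdegree c b a)
  have hcubic : (X ^ 3 - (C c + C b * X + C a * X ^ 2)).degree = ((3 : ℕ) : WithBot ℕ) := by
    rw [degree_sub_eq_left_of_degree_lt (by simpa using hdegree c b a), degree_X_pow]
  have hdvd := (dvd_sub_right h).1 (cubic_dvd_listEval_sub_cubicRem c b a l)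
  have hrem : C (cubicRem c b a l).1 + C (cubicRem c b a l).2.1 * X +
      C (cubicRem c b a l).2.2 * X ^ 2 = 0 :=
    of_not_not fun hne => hmonic.not_dvd_of_degree_lt hne (hcubic ▸ hdegree _ _ _) hdvd
  have hcoeff (n : ℕ) := congrArg (fun f => f.coeff n) hrem
  refine Prod.ext ?_ (Prod.ext ?_ ?_)
  · simpa [coeff_X, coeff_C] using hcoeff 0
  · simpa [coeff_X, coeff_C, coeff_X_pow] using hcoeff 1
  · simpa [coeff_X, coeff_C, coeff_X_pow] using hcoeff 2

theorem irreducible_listEval {k : Type*} [Field k] {l : List ℤ}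
    (hdeg : (listEval l (X : k[X])).natDegree = 6)
    (h : ∀ c b a : k, cubicRem c b a (0 :: 0 :: l) ≠ (0, 0, 0)) :
    Irreducible (listEval l (X : k[X])) := by
  refine irreducible_of_no_monic_cubic_dvd hdeg fun m hm hm3 hdvd => ?_
  have hm_eq : m = X ^ 3 - (C (-m.coeff 0) + C (-m.coeff 1) * X + C (-m.coeff 2) * X ^ 2) := by
    conv_lhs => rw [hm.as_sum, hm3]
    simp only [Finset.sum_range_succ, Finset.sum_range_zero, C_neg]
    ring
  refine h _ _ _ (cubicRem_eq_zero_of_dvd (hm_eq ▸ hdvd.trans (dvd_of_eq ?_)))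
  simp only [listEval, Int.cast_zero]
  ring

end Cubic

section PencilAtPlace

theorem F_eq_pencil : F = pencil RatFunc.X := by
  have hq : q.map (algebraMap ℚ (RatFunc ℚ)) = qEval X :=
    (map_qEval (mapRingHom (algebraMap ℚ (RatFunc ℚ))) X).trans (by rw [coe_mapRingHom, map_X])
  have hr : r.map (algebraMap ℚ (RatFunc ℚ)) = rEval X :=
    (map_rEval (mapRingHom (algebraMap ℚ (RatFunc ℚ))) X).trans (by rw [coe_mapRingHom, map_X])
  rw [F, p, Polynomial.map_add, hq, hr, pencil]

theorem F_natDegree : F.natDegree = 55 := by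
  rw [F_eq_pencil]
  refine natDegree_eq_of_le_of_coeff_ne_zero (natDegree_pencil_le _) ?_
  have hX : (1 : RatFunc ℚ) - RatFunc.X ≠ 0 := by
    rw [← RatFunc.algebraMap_X, ← map_one (algebraMap ℚ[X] (RatFunc ℚ)), ← map_sub, Ne,
      FaithfulSMul.algebraMap_eq_zero_iff, ← neg_eq_zero, neg_sub]
    exact X_sub_C_ne_zero 1
  rw [coeff_pencil]
  exact mul_ne_zero hX (by norm_num)

variable {l : ℕ} [Fact l.Prime]

theorem exists_isRoot_pencil_toZMod_eq {τ : ℤ_[l]} {c : ZMod l}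
    (hc : (pencil (PadicInt.toZMod τ)).IsRoot c) (hsimple : 234256 * adj c c * cofactor c c ≠ 0) :
    ∃ z, (pencil τ).IsRoot z ∧ PadicInt.toZMod z = c := by
  rw [← qEval_mul_derivative_pencil hc] at hsimple
  rw [← map_pencil] at hc hsimple
  exact exists_isRoot_toZMod_eq hc (right_ne_zero_of_mul hsimple)

namespace PadicPlace

variable (P : PadicPlace F l)

theorem map_F : (F.map (algebraMap (RatFunc ℚ) F.SplittingField)).map P.embed =
    pencil (algebraMap ℤ_[l] (AlgebraicClosure ℚ_[l]) P.τ) := by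
  rw [← P.embed_algebraMap_X, ← map_pencil, ← map_pencil, ← F_eq_pencil]

theorem exists_embed_eq_of_isRoot {y : AlgebraicClosure ℚ_[l]}
    (hy : (pencil (algebraMap ℤ_[l] (AlgebraicClosure ℚ_[l]) P.τ)).IsRoot y) :
    ∃ x ∈ F.rootSet F.SplittingField, P.embed x = y := by
  have hF : F.map (algebraMap (RatFunc ℚ) F.SplittingField) ≠ 0 :=
    map_ne_zero (ne_zero_of_natDegree_gt (n := 0) (by rw [F_natDegree]; norm_num))
  rw [← P.map_F, ← mem_roots (map_ne_zero hF), (SplittingField.splits F).roots_map,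
    Multiset.mem_map] at hy
  obtain ⟨x, hx, hxy⟩ := hy
  exact ⟨x, mem_rootSet'.2 (by simpa using hx), hxy⟩

theorem isRoot_embed {x : F.SplittingField} (hx : x ∈ F.rootSet F.SplittingField) :
    (pencil (algebraMap ℤ_[l] (AlgebraicClosure ℚ_[l]) P.τ)).IsRoot (P.embed x) := by
  rw [← P.map_F]
  refine IsRoot.map ?_
  rw [IsRoot, eval_map_algebraMap]
  exact (mem_rootSet.1 hx).2

end PadicPlace

end PencilAtPlace

section Mod461

instance fact_prime_461 : Fact (Nat.Prime 461) := ⟨by norm_num⟩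

/-- The roots of `pencil 102` modulo `461`, where this polynomial splits into distinct linear
factors. -/
def rootsMod461 : Fin 55 → ZMod 461 :=
  ![1, 11, 14, 15, 20, 23, 31, 35, 45, 52, 53, 62, 68, 71, 93, 96, 121, 126, 133, 141, 143, 147,
    156, 176, 178, 182, 185, 218, 244, 251, 264, 270, 271, 272, 278, 300, 320, 321, 324, 340, 347,
    360, 363, 364, 371, 375, 385, 394, 404, 421, 435, 441, 448, 451, 454]

theorem rootsMod461_injective : rootsMod461.Injective := by
  decide +kernel

theorem isRoot_rootsMod461 (i : Fin 55) : (pencil 102).IsRoot (rootsMod461 i) := by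
  rw [IsRoot, eval_pencil]
  revert i
  decide +kernel

theorem qEval_rootsMod461_ne_zero (i : Fin 55) : qEval (rootsMod461 i) ≠ 0 := by
  revert i
  decide +kernel

theorem adj_rootsMod461_ne_zero (i : Fin 55) :
    ∀ j ∉ neighbors i, adj (rootsMod461 i) (rootsMod461 j) ≠ 0 := by
  revert i
  decide +kernel

theorem cofactor_rootsMod461_ne_zero (i : Fin 55) :
    ∀ j ∈ insert i (neighbors i), cofactor (rootsMod461 i) (rootsMod461 j) ≠ 0 := by
  revert i
  decide +kernel

theorem notMem_neighbors_self (i : Fin 55) : i ∉ neighbors i := by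
  revert i
  decide +kernel

variable {τ : ℤ_[461]} {z : Fin 55 → ℤ_[461]}

theorem exists_roots_toZMod_eq_rootsMod461 (hτ : PadicInt.toZMod τ = 102) :
    ∃ z : Fin 55 → ℤ_[461],
      ∀ i, (pencil τ).IsRoot (z i) ∧ PadicInt.toZMod (z i) = rootsMod461 i := by
  refine Classical.skolem.1 fun i => exists_isRoot_pencil_toZMod_eq ?_ ?_
  · rw [hτ]
    exact isRoot_rootsMod461 i
  · exact mul_ne_zero
      (mul_ne_zero (by decide +kernel) (adj_rootsMod461_ne_zero i i (notMem_neighbors_self i)))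
      (cofactor_rootsMod461_ne_zero i i (Finset.mem_insert_self _ _))

theorem injective_of_toZMod_eq_rootsMod461
    (hres : ∀ i, PadicInt.toZMod (z i) = rootsMod461 i) : z.Injective := fun i j hij =>
  rootsMod461_injective (by rw [← hres, ← hres, hij])

theorem adj_eq_zero_iff_mem_neighbors (hroot : ∀ i, (pencil τ).IsRoot (z i))
    (hres : ∀ i, PadicInt.toZMod (z i) = rootsMod461 i) (i j : Fin 55) :
    adj (z i) (z j) = 0 ↔ j ∈ neighbors i := by
  constructor
  · intro hadj
    by_contra hj
    refine adj_rootsMod461_ne_zero i j hj ?_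
    rw [← hres, ← hres, ← map_adj, hadj, map_zero]
  · intro hj
    have hij : i ≠ j := fun h => notMem_neighbors_self i (by rwa [← h] at hj)
    refine (mul_eq_zero.1 (adj_mul_cofactor_eq_zero (hroot i) (hroot j)
      ((injective_of_toZMod_eq_rootsMod461 hres).ne hij))).resolve_right fun hcof => ?_
    refine cofactor_rootsMod461_ne_zero i j (Finset.mem_insert_of_mem hj) ?_
    rw [← hres, ← hres, ← map_cofactor, hcof, map_zero]

theorem exists_eq_of_isRoot_pencil {S : Type*} [CommRing S] [IsDomain S] [CharZero S]
    {φ : ℤ_[461] →+* S} (hφ : Function.Injective φ) (hτ : φ τ ≠ 1)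
    (hroot : ∀ i, (pencil τ).IsRoot (z i))
    (hres : ∀ i, PadicInt.toZMod (z i) = rootsMod461 i) {x : S} (hx : (pencil (φ τ)).IsRoot x) :
    ∃ i, φ (z i) = x :=
  mem_range_of_isRoot (pencil_ne_zero hτ) (natDegree_pencil_le _)
    (hφ.comp (injective_of_toZMod_eq_rootsMod461 hres))
    (fun i => isRoot_pencil_map (hroot i) φ) hx

theorem isCoprime_q_r : IsCoprime q r := by
  let φ := algebraMap ℤ_[461] (AlgebraicClosure ℚ_[461])
  have hφ : Function.Injective φ := algebraMap_padicInt_injective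
  refine (isCoprime_iff_aeval_ne_zero_of_isAlgClosed ℚ (AlgebraicClosure ℚ_[461]) q r).2 fun x => ?_
  have hq : aeval x q = qEval x :=
    (map_qEval (aeval x : ℚ[X] →ₐ[ℚ] AlgebraicClosure ℚ_[461]).toRingHom X).trans
      (congrArg qEval (aeval_X x))
  have hr : aeval x r = rEval x :=
    (map_rEval (aeval x : ℚ[X] →ₐ[ℚ] AlgebraicClosure ℚ_[461]).toRingHom X).trans
      (congrArg rEval (aeval_X x))
  rw [hq, hr]
  by_contra! ⟨hqx, hrx⟩
  obtain ⟨z, hz⟩ := exists_roots_toZMod_eq_rootsMod461 (τ := 102) (map_ofNat _ 102)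
  have hx : (pencil (φ 102)).IsRoot x := by
    rw [IsRoot, eval_pencil, hqx, hrx, add_zero, mul_zero, sub_zero]
  obtain ⟨i, rfl⟩ := exists_eq_of_isRoot_pencil hφ (by rw [map_ofNat]; norm_num) (fun i => (hz i).1)
    (fun i => (hz i).2) hx
  rw [← map_qEval, map_eq_zero_iff φ hφ] at hqx
  refine qEval_rootsMod461_ne_zero i ?_
  rw [← (hz i).2, ← map_qEval, hqx, map_zero]

theorem F_irreducible : Irreducible F := by
  have hpq : IsCoprime p q := by
    have h := isCoprime_q_r.symm.add_mul_left_left 1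
    rwa [mul_one, add_comm, ← p] at h
  have hdeg : F.natDegree ≠ 0 := F_natDegree.trans_ne (by norm_num)
  have hC : algebraMap ℚ (RatFunc ℚ) = RatFunc.C := Subsingleton.elim _ _
  rw [F, hC] at hdeg ⊢
  exact irreducible_map_sub_C_mul_map hpq hdeg

theorem exists_equiv_rootSet : ∃ e : Fin 55 ≃ F.rootSet F.SplittingField,
    ∀ i j, adj (e i : F.SplittingField) (e j) = 0 ↔ j ∈ neighbors i := by
  obtain ⟨P, hP⟩ := exists_padicPlace F (102 : ZMod 461)
  obtain ⟨z, hz⟩ := exists_roots_toZMod_eq_rootsMod461 hP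
  let φ := algebraMap ℤ_[461] (AlgebraicClosure ℚ_[461])
  have hφ : Function.Injective φ := algebraMap_padicInt_injective
  have hτ : φ P.τ ≠ 1 := by
    rw [Ne, map_eq_one_iff φ hφ]
    intro h
    exact absurd (h ▸ hP) (by rw [map_one]; decide +kernel)
  have hlift (i) : ∃ x : F.rootSet F.SplittingField, P.embed x = φ (z i) := by
    obtain ⟨x, hx, hxz⟩ := P.exists_embed_eq_of_isRoot (isRoot_pencil_map (hz i).1 φ)
    exact ⟨⟨x, hx⟩, hxz⟩
  choose e he using hlift
  have hbij : e.Bijective := by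
    constructor
    · intro i j hij
      refine injective_of_toZMod_eq_rootsMod461 (fun i => (hz i).2) (hφ ?_)
      rw [← he, ← he, hij]
    · intro x
      obtain ⟨i, hi⟩ := exists_eq_of_isRoot_pencil hφ hτ (fun i => (hz i).1) (fun i => (hz i).2)
        (P.isRoot_embed x.2)
      exact ⟨i, Subtype.ext (P.embed.injective ((he i).trans hi))⟩
  refine ⟨Equiv.ofBijective e hbij, fun i j => ?_⟩
  rw [← adj_eq_zero_iff_mem_neighbors (fun i => (hz i).1) (fun i => (hz i).2),
    ← map_eq_zero_iff φ hφ, map_adj, ← he, ← he, ← map_adj, map_eq_zero, Equiv.ofBijective_apply,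
    Equiv.ofBijective_apply]

end Mod461

section Mod13

instance fact_prime_13 : Fact (Nat.Prime 13) := ⟨by norm_num⟩

theorem adj_twelve_eq_listEval (x : ZMod 13) :
    adj x 12 = listEval [8, 2, 0, 10, 11, 11, 12] x := by
  revert x
  decide +kernel

theorem adj_X_C_twelve_eq_listEval :
    adj X (C (12 : ZMod 13)) = listEval [8, 2, 0, 10, 11, 11, 12] X := by
  have hdegree : (listEval [8, 2, 0, 10, 11, 11, 12] (X : (ZMod 13)[X])).natDegree ≤ 6 :=
    natDegree_le_iff_coeff_eq_zero.2 fun n hn => by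
      rw [coeff_listEval, List.getD_eq_default _ _ hn, Int.cast_zero]
  refine eq_of_natDegree_lt_card_of_eval_eq _ _ Function.injective_id (fun x => ?_)
    ((max_le (natDegree_adj_le 12) hdegree).trans_lt (by simp))
  rw [id, ← coe_evalRingHom, map_adj, map_listEval, coe_evalRingHom, eval_X, eval_C,
    adj_twelve_eq_listEval]

theorem natDegree_adj_X_C_twelve : (adj X (C (12 : ZMod 13))).natDegree = 6 := by
  refine natDegree_eq_of_le_of_coeff_ne_zero (natDegree_adj_le 12) ?_
  rw [adj_X_C_twelve_eq_listEval, coeff_listEval]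
  decide +kernel

theorem irreducible_adj_X_C_twelve : Irreducible (adj X (C (12 : ZMod 13))) := by
  have hdegree := natDegree_adj_X_C_twelve
  rw [adj_X_C_twelve_eq_listEval] at hdegree ⊢
  exact irreducible_listEval hdegree (by decide +kernel)

theorem exists_gal_of_adj_eq_zero : ∃ x ∈ F.rootSet F.SplittingField,
    ∀ y y' : F.SplittingField, adj x y = 0 → adj x y' = 0 → ∃ σ : F.Gal, σ x = x ∧ σ y = y' := by
  obtain ⟨P, hP⟩ := exists_padicPlace F (3 : ZMod 13)
  have hroot : (pencil (PadicInt.toZMod P.τ)).IsRoot 12 := by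
    rw [hP, IsRoot, eval_pencil]
    decide +kernel
  obtain ⟨z, hz, hz12⟩ := exists_isRoot_pencil_toZMod_eq hroot (by decide +kernel)
  let φ := algebraMap ℤ_[13] (AlgebraicClosure ℚ_[13])
  obtain ⟨x, hx, hxz⟩ := P.exists_embed_eq_of_isRoot (isRoot_pencil_map hz φ)
  have hreduce : (adj X (C z)).map PadicInt.toZMod = adj X (C 12) := by
    rw [← coe_mapRingHom, map_adj, coe_mapRingHom, map_X, map_C, hz12]
  have hirr : Irreducible ((adj X (C z)).map (algebraMap ℤ_[13] ℚ_[13])) := by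
    refine irreducible_map_algebraMap_of_irreducible_map PadicInt.toZMod ℚ_[13] ?_ ?_
    · rw [hreduce, natDegree_adj_X_C_twelve]
      exact natDegree_adj_le z
    · rw [hreduce]
      exact irreducible_adj_X_C_twelve
  have haeval (y : F.SplittingField) (hy : adj x y = 0) :
      aeval (P.embed y) ((adj X (C z)).map (algebraMap ℤ_[13] ℚ_[13])) = 0 := by
    rw [aeval_map_algebraMap, ← AlgHom.coe_toRingHom, map_adj, AlgHom.coe_toRingHom, aeval_X,
      aeval_C, ← hxz, ← map_adj, adj_comm, hy, map_zero]
  refine ⟨x, hx, fun y y' hy hy' => ?_⟩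
  obtain ⟨σ, hσy, hσ⟩ := P.exists_gal_apply_eq hirr (haeval y hy) (haeval y' hy')
  exact ⟨σ, hσ x (hxz ▸ algebraMap_padicInt_mem_range z), hσy⟩

end Mod13

section Mod29

instance fact_prime_29 : Fact (Nat.Prime 29) := ⟨by norm_num⟩

theorem adj_mul_cofactor_self_ne_zero_mod29 (c : ZMod 29) (hc : (pencil 9).IsRoot c) :
    adj c c * cofactor c c ≠ 0 := by
  rw [IsRoot, eval_pencil] at hc
  revert c
  decide +kernel

/-- The residues modulo `29` of the neighbours of the root of `pencil 9` reducing to `6`. -/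
def neighborsMod29 : Fin 6 → ZMod 29 :=
  ![0, 2, 9, 16, 23, 28]

theorem isRoot_neighborsMod29 (k : Fin 6) : (pencil 9).IsRoot (neighborsMod29 k) := by
  rw [IsRoot, eval_pencil]
  revert k
  decide +kernel

variable {τ : ℤ_[29]}

theorem exists_isRoot_toZMod_eq_mod29 (hτ : PadicInt.toZMod τ = 9) {c : ZMod 29}
    (hc : (pencil 9).IsRoot c) : ∃ z, (pencil τ).IsRoot z ∧ PadicInt.toZMod z = c := by
  refine exists_isRoot_pencil_toZMod_eq (hτ ▸ hc) ?_
  rw [mul_assoc]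
  exact mul_ne_zero (by decide +kernel) (adj_mul_cofactor_self_ne_zero_mod29 c hc)

theorem toZMod_ne_of_isRoot_mod29 (hτ : PadicInt.toZMod τ = 9) {z w : ℤ_[29]}
    (hz : (pencil τ).IsRoot z) (hw : (pencil τ).IsRoot w) (hzw : z ≠ w) :
    PadicInt.toZMod z ≠ PadicInt.toZMod w := by
  intro h
  refine adj_mul_cofactor_self_ne_zero_mod29 (PadicInt.toZMod z)
    (hτ ▸ isRoot_pencil_map hz PadicInt.toZMod) ?_
  nth_rw 2 4 [h]
  rw [← map_adj, ← map_cofactor, ← map_mul, adj_mul_cofactor_eq_zero hz hw hzw, map_zero]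

theorem isUnit_leadingCoeff_pencil_mod29 (hτ : PadicInt.toZMod τ = 9) :
    IsUnit (pencil τ).leadingCoeff := by
  have hcoeff : PadicInt.toZMod ((pencil τ).coeff 55) ≠ 0 := by
    rw [← coeff_map, map_pencil, hτ, coeff_pencil]
    decide +kernel
  have hdegree : (pencil τ).natDegree = 55 := natDegree_eq_of_le_of_coeff_ne_zero
    (natDegree_pencil_le τ) fun h => hcoeff (by rw [h, map_zero])
  rw [← coeff_natDegree, hdegree]
  exact isUnit_of_map_unit PadicInt.toZMod _ (IsUnit.mk0 _ hcoeff)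

theorem exists_root_notMem_range (P : PadicPlace F 29) (hP : PadicInt.toZMod P.τ = 9) :
    ∃ y : F.SplittingField,
      P.embed y ∉ (algebraMap ℚ_[29] (AlgebraicClosure ℚ_[29])).range := by
  by_contra! hrange
  obtain ⟨e, -⟩ := exists_equiv_rootSet
  have hint (i : Fin 55) : ∃ z : ℤ_[29], (pencil P.τ).IsRoot z ∧
      algebraMap ℤ_[29] (AlgebraicClosure ℚ_[29]) z = P.embed (e i) := by
    obtain ⟨a, ha⟩ := hrange (e i)
    have hroot : ((pencil P.τ).map (algebraMap ℤ_[29] ℚ_[29])).IsRoot a := by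
      have h := P.isRoot_embed (e i).2
      rw [← ha, IsScalarTower.algebraMap_apply ℤ_[29] ℚ_[29], ← map_pencil] at h
      rw [map_pencil]
      exact h.of_map (algebraMap ℚ_[29] _).injective
    obtain ⟨z, rfl⟩ :=
      mem_range_algebraMap_of_isRoot (isUnit_leadingCoeff_pencil_mod29 hP) hroot
    exact ⟨z, hroot.of_map (IsFractionRing.injective ℤ_[29] ℚ_[29]), ha⟩
  choose z hroot hz using hint
  have hinj : (fun i => PadicInt.toZMod (z i)).Injective := by
    intro i j hij
    by_contra hne
    refine toZMod_ne_of_isRoot_mod29 hP (hroot i) (hroot j) (fun h => hne ?_) hij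
    exact e.injective (Subtype.ext (P.embed.injective (by rw [← hz, ← hz, h])))
  simpa using Fintype.card_le_of_injective _ hinj

theorem exists_eq_of_adj_eq_zero_mod29 (hτ : PadicInt.toZMod τ = 9) {z : ℤ_[29]}
    (hz : (pencil τ).IsRoot z) (hz6 : PadicInt.toZMod z = 6) {S : Type*} [CommRing S] [IsDomain S]
    {φ : ℤ_[29] →+* S} (hφ : Function.Injective φ) {y : S} (hy : adj (φ z) y = 0) :
    ∃ w, φ w = y := by
  choose w hw hwres using fun k => exists_isRoot_toZMod_eq_mod29 hτ (isRoot_neighborsMod29 k)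
  have hadj (k : Fin 6) : adj z (w k) = 0 := by
    have hcof : ∀ k, cofactor 6 (neighborsMod29 k) ≠ 0 := by decide +kernel
    have hne : ∀ k, neighborsMod29 k ≠ 6 := by decide +kernel
    refine (mul_eq_zero.1 (adj_mul_cofactor_eq_zero hz (hw k) ?_)).resolve_right fun h => ?_
    · rintro rfl
      exact hne k ((hwres k).symm.trans hz6)
    · exact hcof k (by rw [← hwres, ← hz6, ← map_cofactor, h, map_zero])
  have hinj : w.Injective := by
    have hinj29 : neighborsMod29.Injective := by decide +kernel
    exact fun i j hij => hinj29 (by rw [← hwres, ← hwres, hij])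
  have heval (u : S) : (adj X (C (φ z))).eval u = adj (φ z) u := by
    rw [← coe_evalRingHom, map_adj, coe_evalRingHom, eval_X, eval_C, adj_comm]
  have hne : adj X (C (φ z)) ≠ 0 := by
    have hself : adj (6 : ZMod 29) 6 ≠ 0 := by decide +kernel
    intro h
    have hφz : φ (adj z z) = 0 := by rw [map_adj, ← heval, h, eval_zero]
    exact hself (by rw [← hz6, ← map_adj, (map_eq_zero_iff φ hφ).1 hφz, map_zero])
  obtain ⟨k, hk⟩ := mem_range_of_isRoot hne (natDegree_adj_le _) (hφ.comp hinj)
    (fun k => (heval _).trans (by rw [Function.comp_apply, ← map_adj, hadj, map_zero]))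
    ((heval y).trans hy)
  exact ⟨w k, hk⟩

theorem exists_gal_ne_one_fixing_neighbors : ∃ x ∈ F.rootSet F.SplittingField,
    ∃ σ : F.Gal, σ ≠ 1 ∧ σ x = x ∧ ∀ y : F.SplittingField, adj x y = 0 → σ y = y := by
  obtain ⟨P, hP⟩ := exists_padicPlace F (9 : ZMod 29)
  have hroot : (pencil (9 : ZMod 29)).IsRoot 6 := by
    rw [IsRoot, eval_pencil]
    decide +kernel
  obtain ⟨z, hz, hz6⟩ := exists_isRoot_toZMod_eq_mod29 hP hroot
  obtain ⟨x, hx, hxz⟩ := P.exists_embed_eq_of_isRoot (isRoot_pencil_map hz (algebraMap _ _))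
  obtain ⟨y, hy⟩ := exists_root_notMem_range P hP
  obtain ⟨σ, hσy, hσ⟩ := P.exists_gal_apply_ne hy
  refine ⟨x, hx, σ, ?_, hσ x (hxz ▸ algebraMap_padicInt_mem_range z), fun y hy => hσ y ?_⟩
  · rintro rfl
    exact hσy rfl
  · obtain ⟨w, hw⟩ := exists_eq_of_adj_eq_zero_mod29 hP hz hz6 algebraMap_padicInt_injective
      (y := P.embed y) (by rw [← hxz, ← map_adj, hy, map_zero])
    exact hw ▸ algebraMap_padicInt_mem_range w

end Mod29

section CardGal

variable (e : Fin 55 ≃ F.rootSet F.SplittingField)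

theorem coe_equiv_smul (σ : F.Gal) (i : Fin 55) :
    letI := e.mulAction F.Gal
    (e (σ • i) : F.SplittingField) = σ (e i) :=
  congrArg Subtype.val (e.apply_symm_apply _)

theorem faithfulSMul_equiv :
    letI := e.mulAction F.Gal
    FaithfulSMul F.Gal (Fin 55) := by
  let _ := e.mulAction F.Gal
  refine ⟨fun {σ σ'} h => Gal.ext F fun x hx => ?_⟩
  obtain ⟨i, hi⟩ := e.surjective ⟨x, hx⟩
  have hx_eq : x = e i := congrArg Subtype.val hi.symm
  rw [hx_eq, ← coe_equiv_smul, h, coe_equiv_smul]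

theorem isPretransitive_equiv :
    letI := e.mulAction F.Gal
    MulAction.IsPretransitive F.Gal (Fin 55) := by
  let _ := e.mulAction F.Gal
  refine ⟨fun i j => ?_⟩
  have hroot (i) : aeval (e i : F.SplittingField) F = 0 := (mem_rootSet.1 (e i).2).2
  have hconj : IsConjRoot (RatFunc ℚ) (e j : F.SplittingField) (e i) :=
    (minpoly.eq_of_irreducible F_irreducible (hroot j)).symm.trans
      (minpoly.eq_of_irreducible F_irreducible (hroot i))
  obtain ⟨σ, hσ⟩ := isConjRoot_iff_exists_algEquiv.1 hconj
  exact ⟨σ, e.injective (Subtype.ext ((coe_equiv_smul e σ i).trans hσ))⟩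

theorem card_gal_F : Nat.card F.Gal = 1320 := by
  obtain ⟨e, he⟩ := exists_equiv_rootSet
  let _ := e.mulAction F.Gal
  have _ := faithfulSMul_equiv e
  have _ := isPretransitive_equiv e
  have smul_eq {σ : F.Gal} {i j : Fin 55} (h : σ (e i : F.SplittingField) = e j) : σ • i = j :=
    e.injective (Subtype.ext ((coe_equiv_smul e σ i).trans h))
  have hN : ActsByAutomorphisms F.Gal neighbors := fun σ i j => by
    rw [← he, ← he, coe_equiv_smul, coe_equiv_smul]
    exact (map_adj (σ : F.SplittingField →+* F.SplittingField) _ _).symm ▸ map_eq_zero σ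
  refine card_eq_of_action_on_neighbors hN ?_ ?_
  · obtain ⟨x, hx, hσ⟩ := exists_gal_of_adj_eq_zero
    obtain ⟨i, hi⟩ := e.surjective ⟨x, hx⟩
    obtain rfl : e i = x := congrArg Subtype.val hi
    refine ⟨i, fun j hj k hk => ?_⟩
    obtain ⟨σ, hσi, hσj⟩ := hσ (e j) (e k) ((he i j).2 hj) ((he i k).2 hk)
    exact ⟨σ, smul_eq hσi, smul_eq hσj⟩
  · obtain ⟨x, hx, σ, hσ1, hσx, hσ⟩ := exists_gal_ne_one_fixing_neighbors
    obtain ⟨i, hi⟩ := e.surjective ⟨x, hx⟩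
    obtain rfl : e i = x := congrArg Subtype.val hi
    exact ⟨i, σ, hσ1, smul_eq hσx, fun j hj => smul_eq (hσ (e j) ((he i j).2 hj))⟩

end CardGal

end Belyi55

theorem belyi_deg55_stmt13 :
    F.natDegree = 55 ∧ Irreducible F ∧ Nat.card F.Gal = 1320 :=
  ⟨Belyi55.F_natDegree, Belyi55.F_irreducible, Belyi55.card_gal_F⟩
end
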